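/- arXiv:1210.8413 — 10 statements merged into one kernel-verified Lean document; each statement's English description precedes it below -/
import Mathlib

section
/- Let K be a field, let n ≥ 2, and let p, q ∈ Kˣ. The single parameter quantum matrix algebras O_p(M_n(K)) and O_q(M_n(K)) are isomorphic as K-algebras if and only if p = q or p = q⁻¹. -/
/-- The defining relations of the single parameter quantum matrix algebra
`O_p(M_n(K))`, on generators `X (i,j)`, `1 ≤ i,j ≤ n`:
`X_{ij}X_{lm} = p·X_{lm}X_{ij}` if (`i > l`, `j = m`) or (`i = l`, `j > m`);
`X_{ij}X_{lm} = X_{lm}X_{ij}` if `i > l`, `j < m`;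
`X_{ij}X_{lm} = X_{lm}X_{ij} + (p - p⁻¹)·X_{im}X_{lj}` if `i > l`, `j > m`. -/
inductive QMatRel (K : Type*) [Field K] (n : ℕ) (p : K) :
    FreeAlgebra K (Fin n × Fin n) → FreeAlgebra K (Fin n × Fin n) → Prop
  | col (i l j : Fin n) (h : l < i) :
      QMatRel K n p (FreeAlgebra.ι K (i, j) * FreeAlgebra.ι K (l, j))
        (p • (FreeAlgebra.ι K (l, j) * FreeAlgebra.ι K (i, j)))
  | row (i j m : Fin n) (h : m < j) :
      QMatRel K n p (FreeAlgebra.ι K (i, j) * FreeAlgebra.ι K (i, m))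
        (p • (FreeAlgebra.ι K (i, m) * FreeAlgebra.ι K (i, j)))
  | comm (i l j m : Fin n) (h1 : l < i) (h2 : j < m) :
      QMatRel K n p (FreeAlgebra.ι K (i, j) * FreeAlgebra.ι K (l, m))
        (FreeAlgebra.ι K (l, m) * FreeAlgebra.ι K (i, j))
  | quantum (i l j m : Fin n) (h1 : l < i) (h2 : m < j) :
      QMatRel K n p (FreeAlgebra.ι K (i, j) * FreeAlgebra.ι K (l, m))
        (FreeAlgebra.ι K (l, m) * FreeAlgebra.ι K (i, j) +
          (p - p⁻¹) • (FreeAlgebra.ι K (i, m) * FreeAlgebra.ι K (l, j)))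

/-- The single parameter quantum matrix algebra `O_p(M_n(K))`. -/
abbrev QMat (K : Type*) [Field K] (n : ℕ) (p : K) := RingQuot (QMatRel K n p)

namespace QM

section
variable {K : Type*} [Field K] {n : ℕ}

/-- the generator of the quantum matrix algebra -/
noncomputable def X (K : Type*) [Field K] (n : ℕ) (p : K) (c : Fin n × Fin n) : QMat K n p :=
  RingQuot.mkAlgHom K (QMatRel K n p) (FreeAlgebra.ι K c)

lemma X_col (p : K) {i l : Fin n} (j : Fin n) (h : l < i) :
    X K n p (i, j) * X K n p (l, j) = p • (X K n p (l, j) * X K n p (i, j)) := by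
  have := RingQuot.mkAlgHom_rel K (QMatRel.col (K := K) (p := p) i l j h)
  simpa [X] using this

lemma X_row (p : K) (i : Fin n) {j m : Fin n} (h : m < j) :
    X K n p (i, j) * X K n p (i, m) = p • (X K n p (i, m) * X K n p (i, j)) := by
  have := RingQuot.mkAlgHom_rel K (QMatRel.row (K := K) (p := p) i j m h)
  simpa [X] using this

lemma X_comm (p : K) {i l j m : Fin n} (h : l < i) (h2 : j < m) :
    X K n p (i, j) * X K n p (l, m) = X K n p (l, m) * X K n p (i, j) := by
  have := RingQuot.mkAlgHom_rel K (QMatRel.comm (K := K) (p := p) i l j m h h2)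
  simpa [X] using this

lemma X_quantum (p : K) {i l j m : Fin n} (h : l < i) (h2 : m < j) :
    X K n p (i, j) * X K n p (l, m) = X K n p (l, m) * X K n p (i, j)
      + (p - p⁻¹) • (X K n p (i, m) * X K n p (l, j)) := by
  have := RingQuot.mkAlgHom_rel K (QMatRel.quantum (K := K) (p := p) i l j m h h2)
  simpa [X] using this

/-- a family satisfying the relations -/
structure IsQ {A : Type*} [Ring A] [Algebra K A] (p : K) (f : Fin n × Fin n → A) : Prop where
  col : ∀ i l j, l < i → f (i, j) * f (l, j) = p • (f (l, j) * f (i, j))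
  row : ∀ i j m, m < j → f (i, j) * f (i, m) = p • (f (i, m) * f (i, j))
  comm : ∀ i l j m, l < i → j < m → f (i, j) * f (l, m) = f (l, m) * f (i, j)
  quantum : ∀ i l j m, l < i → m < j → f (i, j) * f (l, m) = f (l, m) * f (i, j)
      + (p - p⁻¹) • (f (i, m) * f (l, j))

/-- the universal property -/
noncomputable def lift {A : Type*} [Ring A] [Algebra K A] {p : K} {f : Fin n × Fin n → A}
    (hf : IsQ p f) : QMat K n p →ₐ[K] A :=
  RingQuot.liftAlgHom K ⟨FreeAlgebra.lift K f, by
    intro x y h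
    induction h with
    | col i l j h => simpa using hf.col i l j h
    | row i j m h => simpa using hf.row i j m h
    | comm i l j m h h2 => simpa using hf.comm i l j m h h2
    | quantum i l j m h h2 => simpa using hf.quantum i l j m h h2⟩

@[simp] lemma lift_X {A : Type*} [Ring A] [Algebra K A] {p : K} {f : Fin n × Fin n → A}
    (hf : IsQ p f) (c : Fin n × Fin n) : lift hf (X K n p c) = f c := by
  simp [lift, X]

lemma induct {p : K} {P : QMat K n p → Prop} (h0 : ∀ k : K, P (algebraMap K _ k))
    (hX : ∀ c, P (X K n p c)) (ha : ∀ x y, P x → P y → P (x + y))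
    (hm : ∀ x y, P x → P y → P (x * y)) (z : QMat K n p) : P z := by
  obtain ⟨z, rfl⟩ := RingQuot.mkAlgHom_surjective K (QMatRel K n p) z
  induction z using FreeAlgebra.induction with
  | grade0 r => simpa using h0 r
  | grade1 c => exact hX c
  | mul a b iha ihb => simpa using hm _ _ iha ihb
  | add a b iha ihb => simpa using ha _ _ iha ihb

lemma hom_ext' {A : Type*} [Ring A] [Algebra K A] {p : K} {f g : QMat K n p →ₐ[K] A}
    (h : ∀ c, f (X K n p c) = g (X K n p c)) : f = g := by
  refine AlgHom.ext fun z => ?_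
  induction z using induct with
  | h0 k => simp
  | hX c => exact h c
  | ha x y hx hy => simp [hx, hy]
  | hm x y hx hy => simp [hx, hy]

/-- reversal of both indices inverts the parameter -/
lemma isQ_rev (q p : K) (hq : q ≠ 0) (hpq : p = q⁻¹) :
    IsQ p (fun c : Fin n × Fin n => X K n q (c.1.rev, c.2.rev)) where
  col i l j h := by
    simp only []
    rw [X_col q _ (Fin.rev_lt_rev.2 h), smul_smul, hpq, inv_mul_cancel₀ hq, one_smul]
  row i j m h := by
    simp only []
    rw [X_row q _ (Fin.rev_lt_rev.2 h), smul_smul, hpq, inv_mul_cancel₀ hq, one_smul]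
  comm i l j m h h2 := by
    simp only []
    rw [X_comm q (Fin.rev_lt_rev.2 h) (Fin.rev_lt_rev.2 h2)]
  quantum i l j m h h2 := by
    simp only []
    rw [X_quantum q (Fin.rev_lt_rev.2 h) (Fin.rev_lt_rev.2 h2),
      X_comm q (Fin.rev_lt_rev.2 h) (Fin.rev_lt_rev.2 h2), hpq, inv_inv, add_assoc, ← add_smul]
    simp

/-- the isomorphism for inverse parameters -/
noncomputable def revEquiv (p q : K) (hp : p ≠ 0) (hq : q ≠ 0) (hpq : p = q⁻¹) :
    QMat K n p ≃ₐ[K] QMat K n q :=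
  AlgEquiv.ofAlgHom (lift (isQ_rev q p hq hpq)) (lift (isQ_rev p q hp (by simp [hpq])))
    (hom_ext' (by simp)) (hom_ext' (by simp))

/-- a bilinear form compatible with the relations -/
structure IsB (q : K) (B : (Fin n × Fin n → K) →ₗ[K] (Fin n × Fin n → K) →ₗ[K] K) : Prop where
  col : ∀ i l j, l < i → B (Pi.single (i, j) 1) (Pi.single (l, j) 1)
    = q * B (Pi.single (l, j) 1) (Pi.single (i, j) 1)
  row : ∀ i j m, m < j → B (Pi.single (i, j) 1) (Pi.single (i, m) 1)
    = q * B (Pi.single (i, m) 1) (Pi.single (i, j) 1)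
  comm : ∀ i l j m, l < i → j < m → B (Pi.single (i, j) 1) (Pi.single (l, m) 1)
    = B (Pi.single (l, m) 1) (Pi.single (i, j) 1)
  quantum : ∀ i l j m, l < i → m < j → B (Pi.single (i, j) 1) (Pi.single (l, m) 1)
    = B (Pi.single (l, m) 1) (Pi.single (i, j) 1)
      + (q - q⁻¹) * B (Pi.single (i, m) 1) (Pi.single (l, j) 1)

/-- nilpotent endomorphism attached to a vector -/
noncomputable def act (B : (Fin n × Fin n → K) →ₗ[K] (Fin n × Fin n → K) →ₗ[K] K)
    (w : Fin n × Fin n → K) : Module.End K (K × (Fin n × Fin n → K) × K) where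
  toFun x := (0, x.1 • w, B w x.2.1)
  map_add' x y := by simp [add_smul]
  map_smul' k x := by simp [mul_smul]

lemma act_apply (B : (Fin n × Fin n → K) →ₗ[K] (Fin n × Fin n → K) →ₗ[K] K)
    (w : Fin n × Fin n → K) (x) : act B w x = (0, x.1 • w, B w x.2.1) := rfl

lemma isQ_act {q : K} {B : (Fin n × Fin n → K) →ₗ[K] (Fin n × Fin n → K) →ₗ[K] K}
    (hB : IsB q B) : IsQ q (fun c => act B (Pi.single c 1)) where
  col i l j h := by
    refine LinearMap.ext fun x => ?_
    simp [act_apply, hB.col i l j h]; ring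
  row i j m h := by
    refine LinearMap.ext fun x => ?_
    simp [act_apply, hB.row i j m h]; ring
  comm i l j m h h2 := by
    refine LinearMap.ext fun x => ?_
    simp [act_apply, hB.comm i l j m h h2]
  quantum i l j m h h2 := by
    refine LinearMap.ext fun x => ?_
    simp [act_apply, hB.quantum i l j m h h2]; ring

lemma isQ_tsz (q : K) : IsQ q
    (fun c : Fin n × Fin n => (TrivSqZeroExt.inr (Pi.single c 1) :
      TrivSqZeroExt K (Fin n × Fin n → K))) where
  col i l j h := by simp
  row i l j h := by simp
  comm i l j m h h2 := by simp
  quantum i l j m h h2 := by simp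

/-- first order part at the origin -/
noncomputable def D (q : K) : QMat K n q →ₐ[K] TrivSqZeroExt K (Fin n × Fin n → K) :=
  lift (isQ_tsz q)

lemma rho_form {q : K} {B : (Fin n × Fin n → K) →ₗ[K] (Fin n × Fin n → K) →ₗ[K] K}
    (hB : IsB q B) (z : QMat K n q) : ∃ β : K, ∀ s v t, lift (isQ_act hB) z (s, v, t) =
      ((D q z).fst * s, (D q z).fst • v + s • (D q z).snd,
        (D q z).fst * t + B (D q z).snd v + s * β) := by
  induction z using induct with
  | h0 k =>
    refine ⟨0, fun s v t => ?_⟩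
    simp [TrivSqZeroExt.algebraMap_eq_inl, Module.algebraMap_end_apply]
  | hX c =>
    refine ⟨0, fun s v t => ?_⟩
    simp [D, act_apply]
  | ha x y hx hy =>
    obtain ⟨b, hx⟩ := hx
    obtain ⟨b', hy⟩ := hy
    refine ⟨b + b', fun s v t => ?_⟩
    simp only [map_add, LinearMap.add_apply, hx, hy, TrivSqZeroExt.fst_add,
      TrivSqZeroExt.snd_add, Prod.mk_add_mk, Prod.mk.injEq]
    refine ⟨by ring, by module, by ring⟩
  | hm x y hx hy =>
    obtain ⟨b, hx⟩ := hx
    obtain ⟨b', hy⟩ := hy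
    refine ⟨(D q x).fst * b' + B (D q x).snd (D q y).snd + (D q y).fst * b, fun s v t => ?_⟩
    simp only [map_mul, Module.End.mul_apply, hx, hy, TrivSqZeroExt.fst_mul, op_smul_eq_smul,
      TrivSqZeroExt.snd_mul, Prod.mk.injEq, map_add, map_smul, LinearMap.add_apply,
      LinearMap.smul_apply, smul_eq_mul]
    refine ⟨by ring, by module, by ring⟩

lemma B_rel {q p : K} {B : (Fin n × Fin n → K) →ₗ[K] (Fin n × Fin n → K) →ₗ[K] K}
    (hB : IsB q B) (x y : QMat K n q) (hx : (D q x).fst = 0) (hy : (D q y).fst = 0)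
    (h : x * y = p • (y * x)) :
    B (D q x).snd (D q y).snd = p * B (D q y).snd (D q x).snd := by
  obtain ⟨b, h1⟩ := rho_form hB x
  obtain ⟨b', h2⟩ := rho_form hB y
  have := congrArg (fun z => lift (isQ_act hB) z (1, 0, 0)) h
  simpa [h1, h2, hx, hy] using this

/-- elementary bilinear form -/
noncomputable def E (a b : Fin n × Fin n) :
    (Fin n × Fin n → K) →ₗ[K] (Fin n × Fin n → K) →ₗ[K] K :=
  (LinearMap.proj a : (Fin n × Fin n → K) →ₗ[K] K).smulRight (LinearMap.proj b)

lemma E_apply (a b : Fin n × Fin n) (u v : Fin n × Fin n → K) : E a b u v = u a * v b := by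
  simp [E]

lemma isB_same (q : K) (a : Fin n × Fin n) : IsB q (E a a) where
  col i l j h := by simp only [E_apply, Pi.single_apply]; grind
  row i l j h := by simp only [E_apply, Pi.single_apply]; grind
  comm i l j m h h2 := by simp only [E_apply, Pi.single_apply]; grind
  quantum i l j m h h2 := by simp only [E_apply, Pi.single_apply]; grind

lemma isB_col (q : K) (i l j : Fin n) (h : l < i) :
    IsB q (q • E (i, j) (l, j) + E (l, j) (i, j)) where
  col i l j h := by simp [E_apply, Pi.single_apply]; grind
  row i l j h := by simp [E_apply, Pi.single_apply]; grind
  comm i l j m h h2 := by simp [E_apply, Pi.single_apply]; grind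
  quantum i l j m h h2 := by simp [E_apply, Pi.single_apply]; grind

lemma isB_row (q : K) (i j m : Fin n) (h : m < j) :
    IsB q (q • E (i, j) (i, m) + E (i, m) (i, j)) where
  col i l j h := by simp [E_apply, Pi.single_apply]; grind
  row i l j h := by simp [E_apply, Pi.single_apply]; grind
  comm i l j m h h2 := by simp [E_apply, Pi.single_apply]; grind
  quantum i l j m h h2 := by simp [E_apply, Pi.single_apply]; grind

lemma isB_diag (q : K) (i l j m : Fin n) (h : l < i) (h2 : m < j) :
    IsB q (E (i, j) (l, m) + E (l, m) (i, j)) where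
  col i l j h := by simp [E_apply, Pi.single_apply]; grind
  row i l j h := by simp [E_apply, Pi.single_apply]; grind
  comm i l j m h h2 := by simp [E_apply, Pi.single_apply]; grind
  quantum i l j m h h2 := by simp [E_apply, Pi.single_apply]; grind

lemma isB_anti (q : K) (i l j m : Fin n) (h : l < i) (h2 : m < j) :
    IsB q (E (i, m) (l, j) + E (l, j) (i, m) + (q - q⁻¹) • E (i, j) (l, m)) where
  col i l j h := by simp [E_apply, Pi.single_apply]; grind
  row i l j h := by simp [E_apply, Pi.single_apply]; grind
  comm i l j m h h2 := by simp [E_apply, Pi.single_apply]; grind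
  quantum i l j m h h2 := by simp [E_apply, Pi.single_apply]; grind

/-- leading index of a nonzero vector, in the lexicographic order -/
lemma exists_lead (u : Fin n × Fin n → K) (hu : u ≠ 0) : ∃ i j, u (i, j) ≠ 0 ∧
    ∀ k l, (i < k ∨ i = k ∧ j < l) → u (k, l) = 0 := by
  classical
  obtain ⟨c, hc⟩ := Function.ne_iff.1 hu
  let S : Finset (Fin n ×ₗ Fin n) := Finset.univ.filter fun c => u (ofLex c) ≠ 0
  have hS : S.Nonempty := ⟨toLex c, by simpa [S] using hc⟩
  obtain ⟨m, hm, hmax⟩ := S.exists_max_image id hS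
  refine ⟨(ofLex m).1, (ofLex m).2, by simpa [S] using hm, fun k l h => ?_⟩
  by_contra h0
  have h1 := hmax (toLex (k, l)) (by simpa [S] using h0)
  have h2 : m < toLex (k, l) := Prod.Lex.lt_iff.2 (by simpa using h)
  exact absurd h1 (not_le.2 h2)

lemma lead_gt {p q : K} (hp : p ≠ 1) (u v : Fin n × Fin n → K) (i j l m : Fin n)
    (hu : u (i, j) ≠ 0) (hu' : ∀ k r, (i < k ∨ i = k ∧ j < r) → u (k, r) = 0)
    (hv : v (l, m) ≠ 0) (hv' : ∀ k r, (l < k ∨ l = k ∧ m < r) → v (k, r) = 0)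
    (hlt : l < i ∨ l = i ∧ m < j)
    (H : ∀ B, IsB q B → B u v = p * B v u) : p = q := by
  have hvij : v (i, j) = 0 := hv' _ _ hlt
  have huv : u (i, j) * v (l, m) ≠ 0 := mul_ne_zero hu hv
  rcases hlt with h | ⟨rfl, h⟩
  · rcases lt_trichotomy j m with h2 | rfl | h2
    · have := H _ (isB_anti q i l m j h h2)
      simp [E_apply, hvij, hv' i m (Or.inl h), hu' i m (Or.inr ⟨rfl, h2⟩)] at this
      exfalso; apply hp
      apply mul_right_cancel₀ huv; linear_combination -this
    · have := H _ (isB_col q i l j h)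
      simp [E_apply, hvij] at this
      apply mul_right_cancel₀ huv; linear_combination -this
    · have := H _ (isB_diag q i l j m h h2)
      simp [E_apply, hvij] at this
      exfalso; apply hp
      apply mul_right_cancel₀ huv; linear_combination -this
  · have := H _ (isB_row q l j m h)
    simp [E_apply, hvij] at this
    apply mul_right_cancel₀ huv; linear_combination -this

lemma lead {p q : K} (hp0 : p ≠ 0) (hp : p ≠ 1) (u v : Fin n × Fin n → K)
    (hu : u ≠ 0) (hv : v ≠ 0)
    (H : ∀ B, IsB q B → B u v = p * B v u) : p = q ∨ p = q⁻¹ := by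
  obtain ⟨i, j, hu, hu'⟩ := exists_lead u hu
  obtain ⟨l, m, hv, hv'⟩ := exists_lead v hv
  by_cases h1 : l < i ∨ l = i ∧ m < j
  · exact Or.inl (lead_gt hp u v i j l m hu hu' hv hv' h1 H)
  by_cases h2 : i < l ∨ i = l ∧ j < m
  · right
    rw [← lead_gt (p := p⁻¹) (q := q) (by simpa using hp) v u l m i j hv hv' hu hu' h2
      (fun B hB => by rw [H B hB, inv_mul_cancel_left₀ hp0]), inv_inv]
  · obtain ⟨rfl, rfl⟩ : i = l ∧ j = m := by grind
    have := H _ (isB_same q (i, j))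
    simp only [E_apply] at this
    exfalso; apply hp
    apply mul_right_cancel₀ (mul_ne_zero hu hv); linear_combination -this

lemma tsz_zero {p : K} (hp : p ≠ 1) {z w : TrivSqZeroExt K (Fin n × Fin n → K)}
    (h : z * w = p • (w * z)) : z * w = 0 := by
  rw [mul_comm w z] at h
  have h' : (1 - p) • (z * w) = 0 := by rw [sub_smul, one_smul, ← h, sub_self]
  exact (smul_eq_zero.1 h').resolve_left (sub_ne_zero.2 hp.symm)

lemma tsz_fst {z w : TrivSqZeroExt K (Fin n × Fin n → K)}
    (h : z * w = 0) (hz : z.snd ≠ 0) : w.fst = 0 := by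
  have h1 := congrArg TrivSqZeroExt.fst h
  have h2 := congrArg TrivSqZeroExt.snd h
  simp at h1 h2
  by_contra hw
  have hz0 := h1.resolve_right hw
  rw [hz0, zero_smul, zero_add] at h2
  exact (smul_eq_zero.1 h2).elim hw hz

lemma snd_ne_zero {p q : K} (Φ : QMat K n p ≃ₐ[K] QMat K n q) (c : Fin n × Fin n) :
    (D q (Φ (X K n p c))).snd ≠ 0 := by
  let d : Fin n × Fin n → (Fin n × Fin n → K) := fun c => (D q (Φ (X K n p c))).snd
  have hspan : ∀ z, (D q (Φ z)).snd ∈ Submodule.span K (Set.range d) := by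
    intro z
    induction z using induct with
    | h0 k => simp [TrivSqZeroExt.algebraMap_eq_inl]
    | hX c => exact Submodule.subset_span ⟨c, rfl⟩
    | ha x y hx hy => simpa using add_mem hx hy
    | hm x y hx hy =>
      simpa using add_mem (Submodule.smul_mem _ _ hy) (Submodule.smul_mem _ _ hx)
  have htop : ⊤ ≤ Submodule.span K (Set.range d) := by
    rw [← (Pi.basisFun K (Fin n × Fin n)).span_eq, Submodule.span_le]
    rintro _ ⟨c, rfl⟩
    have := hspan (Φ.symm (X K n q c))
    simpa [D] using this
  have hli : LinearIndependent K d :=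
    linearIndependent_of_top_le_span_of_card_eq_finrank htop (by simp)
  exact hli.ne_zero c

lemma main {p q : K} (hn : 2 ≤ n) (hp0 : p ≠ 0) (hp : p ≠ 1)
    (Φ : QMat K n p ≃ₐ[K] QMat K n q) : p = q ∨ p = q⁻¹ := by
  let i0 : Fin n := ⟨0, by omega⟩
  let i1 : Fin n := ⟨1, by omega⟩
  have h01 : i0 < i1 := by simp [i0, i1]
  have hrel := congrArg Φ (X_row p i0 h01)
  simp only [map_mul, map_smul] at hrel
  have hD := congrArg (D q) hrel
  simp only [map_mul, map_smul] at hD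
  have hz := tsz_zero hp hD
  have n0 := snd_ne_zero Φ (i0, i0)
  have n1 := snd_ne_zero Φ (i0, i1)
  have f0 := tsz_fst hz n1
  have f1 := tsz_fst (by rw [mul_comm]; exact hz) n0
  exact lead hp0 hp _ _ n1 n0 (fun B hB => B_rel hB _ _ f1 f0 hrel)

end

end QM

/-- for `n ≥ 2`, `O_p(M_n(K)) ≅ O_q(M_n(K))` iff `p = q` or
`p = q⁻¹`. -/
theorem qMat_iso_iff (K : Type*) [Field K] (n : ℕ) (hn : 2 ≤ n) (p q : Kˣ) :
    Nonempty (QMat K n (p : K) ≃ₐ[K] QMat K n (q : K)) ↔ (p = q ∨ p = q⁻¹) := by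
  constructor
  · rintro ⟨Φ⟩
    by_cases hp : (p : K) = 1
    · by_cases hq : (q : K) = 1
      · left; ext; rw [hp, hq]
      · rcases QM.main hn q.ne_zero hq Φ.symm with h | h
        · left; ext; exact h.symm
        · right; ext; simp [h]
    · rcases QM.main hn p.ne_zero hp Φ with h | h
      · left; ext; exact h
      · right; ext; simp [h]
  · rintro (rfl | h)
    · exact ⟨AlgEquiv.refl⟩
    · exact ⟨QM.revEquiv _ _ p.ne_zero q.ne_zero (by simp [h])⟩
end

section
/- Let K be a field and c, d, q₁, q₂ ∈ Kˣ. Then R(q₁⁻¹c⁻¹, q₁d⁻¹, q₁, q₂⁻¹) is isomorphic to R(c, d, q₁, q₂) as K-algebras; an isomorphism is given by x₁ ↦ cd·y₁, x₂ ↦ y₄, x₃ ↦ y₃, x₄ ↦ y₂, where x₁,…,x₄ are the generators of the source and y₁,…,y₄ those of the target. -/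
/-- The defining relations of Jordan's ambiskew polynomial ring `R(a,b,p₁,p₂)`,
with generators `x₁ = ι 0`, `x₂ = ι 1`, `x₃ = ι 2`, `x₄ = ι 3`:
`x₄x₁ = a·x₁x₄`, `x₂x₁ = p₁⁻¹a⁻¹·x₁x₂`, `x₁x₃ = p₁·x₃x₁`, `x₄x₃ = b·x₃x₄`,
`x₂x₃ = p₁b⁻¹·x₃x₂`, `x₂x₄ = p₂·x₄x₂ + (1 - p₂ab)·x₁x₃`. -/
inductive AmbRel (K : Type*) [Field K] (a b p₁ p₂ : K) :
    FreeAlgebra K (Fin 4) → FreeAlgebra K (Fin 4) → Prop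
  | r41 : AmbRel K a b p₁ p₂ (FreeAlgebra.ι K 3 * FreeAlgebra.ι K 0)
      (a • (FreeAlgebra.ι K 0 * FreeAlgebra.ι K 3))
  | r21 : AmbRel K a b p₁ p₂ (FreeAlgebra.ι K 1 * FreeAlgebra.ι K 0)
      ((p₁⁻¹ * a⁻¹) • (FreeAlgebra.ι K 0 * FreeAlgebra.ι K 1))
  | r13 : AmbRel K a b p₁ p₂ (FreeAlgebra.ι K 0 * FreeAlgebra.ι K 2)
      (p₁ • (FreeAlgebra.ι K 2 * FreeAlgebra.ι K 0))
  | r43 : AmbRel K a b p₁ p₂ (FreeAlgebra.ι K 3 * FreeAlgebra.ι K 2)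
      (b • (FreeAlgebra.ι K 2 * FreeAlgebra.ι K 3))
  | r23 : AmbRel K a b p₁ p₂ (FreeAlgebra.ι K 1 * FreeAlgebra.ι K 2)
      ((p₁ * b⁻¹) • (FreeAlgebra.ι K 2 * FreeAlgebra.ι K 1))
  | r24 : AmbRel K a b p₁ p₂ (FreeAlgebra.ι K 1 * FreeAlgebra.ι K 3)
      (p₂ • (FreeAlgebra.ι K 3 * FreeAlgebra.ι K 1) +
        (1 - p₂ * a * b) • (FreeAlgebra.ι K 0 * FreeAlgebra.ι K 2))

/-- Jordan's ambiskew polynomial ring `R(a,b,p₁,p₂)`. -/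
abbrev Ambiskew (K : Type*) [Field K] (a b p₁ p₂ : K) := RingQuot (AmbRel K a b p₁ p₂)

/-- The images of the four free generators in `R(a,b,p₁,p₂)`;
`agen K a b p₁ p₂ i` is the generator `x_{i+1}`. -/
noncomputable def agen (K : Type*) [Field K] (a b p₁ p₂ : K) (i : Fin 4) :
    Ambiskew K a b p₁ p₂ :=
  RingQuot.mkAlgHom K (AmbRel K a b p₁ p₂) (FreeAlgebra.ι K i)

/-- Universal property of `R(a,b,p₁,p₂)`. -/
theorem amb_lift (K : Type*) [Field K] (a b p₁ p₂ : K) {A : Type*} [Ring A] [Algebra K A]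
    (z : Fin 4 → A)
    (h41 : z 3 * z 0 = a • (z 0 * z 3))
    (h21 : z 1 * z 0 = (p₁⁻¹ * a⁻¹) • (z 0 * z 1))
    (h13 : z 0 * z 2 = p₁ • (z 2 * z 0))
    (h43 : z 3 * z 2 = b • (z 2 * z 3))
    (h23 : z 1 * z 2 = (p₁ * b⁻¹) • (z 2 * z 1))
    (h24 : z 1 * z 3 = p₂ • (z 3 * z 1) + (1 - p₂ * a * b) • (z 0 * z 2)) :
    ∃ f : Ambiskew K a b p₁ p₂ →ₐ[K] A, ∀ i, f (agen K a b p₁ p₂ i) = z i := by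
  have key : ∀ ⦃x y⦄, AmbRel K a b p₁ p₂ x y →
      FreeAlgebra.lift K z x = FreeAlgebra.lift K z y := by
    intro x y h
    cases h <;> simpa only [map_mul, map_smul, map_add, FreeAlgebra.lift_ι_apply]
  refine ⟨RingQuot.liftAlgHom K ⟨FreeAlgebra.lift K z, key⟩, fun i => ?_⟩
  simp only [agen, RingQuot.liftAlgHom_mkAlgHom_apply, FreeAlgebra.lift_ι_apply]

/-- Algebra maps out of `R(a,b,p₁,p₂)` are determined on the generators. -/
theorem amb_ext (K : Type*) [Field K] (a b p₁ p₂ : K) {A : Type*} [Ring A] [Algebra K A]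
    (f g : Ambiskew K a b p₁ p₂ →ₐ[K] A)
    (h : ∀ i, f (agen K a b p₁ p₂ i) = g (agen K a b p₁ p₂ i)) : f = g := by
  apply RingQuot.ringQuot_ext'
  apply FreeAlgebra.hom_ext
  funext i
  exact h i

/-- The relations hold among the generators. -/
theorem amb_rels (K : Type*) [Field K] (a b p₁ p₂ : K) (z : Fin 4 → Ambiskew K a b p₁ p₂)
    (hz : z = agen K a b p₁ p₂) :
    (z 3 * z 0 = a • (z 0 * z 3)) ∧
    (z 1 * z 0 = (p₁⁻¹ * a⁻¹) • (z 0 * z 1)) ∧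
    (z 0 * z 2 = p₁ • (z 2 * z 0)) ∧
    (z 3 * z 2 = b • (z 2 * z 3)) ∧
    (z 1 * z 2 = (p₁ * b⁻¹) • (z 2 * z 1)) ∧
    (z 1 * z 3 = p₂ • (z 3 * z 1) + (1 - p₂ * a * b) • (z 0 * z 2)) := by
  subst hz
  refine ⟨?_, ?_, ?_, ?_, ?_, ?_⟩
  · simpa only [agen, map_mul, map_smul, map_add] using
      RingQuot.mkAlgHom_rel K (AmbRel.r41 (a := a) (b := b) (p₁ := p₁) (p₂ := p₂))
  · simpa only [agen, map_mul, map_smul, map_add] using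
      RingQuot.mkAlgHom_rel K (AmbRel.r21 (a := a) (b := b) (p₁ := p₁) (p₂ := p₂))
  · simpa only [agen, map_mul, map_smul, map_add] using
      RingQuot.mkAlgHom_rel K (AmbRel.r13 (a := a) (b := b) (p₁ := p₁) (p₂ := p₂))
  · simpa only [agen, map_mul, map_smul, map_add] using
      RingQuot.mkAlgHom_rel K (AmbRel.r43 (a := a) (b := b) (p₁ := p₁) (p₂ := p₂))
  · simpa only [agen, map_mul, map_smul, map_add] using
      RingQuot.mkAlgHom_rel K (AmbRel.r23 (a := a) (b := b) (p₁ := p₁) (p₂ := p₂))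
  · simpa only [agen, map_mul, map_smul, map_add] using
      RingQuot.mkAlgHom_rel K (AmbRel.r24 (a := a) (b := b) (p₁ := p₁) (p₂ := p₂))

/-- `R(q₁⁻¹c⁻¹, q₁d⁻¹, q₁, q₂⁻¹) ≅ R(c,d,q₁,q₂)` via
`x₁ ↦ cd·y₁`, `x₂ ↦ y₄`, `x₃ ↦ y₃`, `x₄ ↦ y₂`. -/
theorem ambiskew_iso_two (K : Type*) [Field K] (c d q₁ q₂ : Kˣ) :
    ∃ Φ : Ambiskew K ((q₁ : K)⁻¹ * (c : K)⁻¹) ((q₁ : K) * (d : K)⁻¹) (q₁ : K) ((q₂ : K)⁻¹)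
        ≃ₐ[K] Ambiskew K (c : K) (d : K) (q₁ : K) (q₂ : K),
      Φ (agen K ((q₁ : K)⁻¹ * (c : K)⁻¹) ((q₁ : K) * (d : K)⁻¹) (q₁ : K) ((q₂ : K)⁻¹) 0) =
        ((c : K) * (d : K)) • agen K (c : K) (d : K) (q₁ : K) (q₂ : K) 0 ∧
      Φ (agen K ((q₁ : K)⁻¹ * (c : K)⁻¹) ((q₁ : K) * (d : K)⁻¹) (q₁ : K) ((q₂ : K)⁻¹) 1) =
        agen K (c : K) (d : K) (q₁ : K) (q₂ : K) 3 ∧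
      Φ (agen K ((q₁ : K)⁻¹ * (c : K)⁻¹) ((q₁ : K) * (d : K)⁻¹) (q₁ : K) ((q₂ : K)⁻¹) 2) =
        agen K (c : K) (d : K) (q₁ : K) (q₂ : K) 2 ∧
      Φ (agen K ((q₁ : K)⁻¹ * (c : K)⁻¹) ((q₁ : K) * (d : K)⁻¹) (q₁ : K) ((q₂ : K)⁻¹) 3) =
        agen K (c : K) (d : K) (q₁ : K) (q₂ : K) 1 := by
  have hc : (c : K) ≠ 0 := c.ne_zero
  have hd : (d : K) ≠ 0 := d.ne_zero
  have h1 : (q₁ : K) ≠ 0 := q₁.ne_zero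
  have h2 : (q₂ : K) ≠ 0 := q₂.ne_zero
  generalize (c : K) = c at *
  generalize (d : K) = d at *
  generalize (q₁ : K) = q at *
  generalize (q₂ : K) = r at *
  obtain ⟨f, hf⟩ : ∃ f : Ambiskew K (q⁻¹ * c⁻¹) (q * d⁻¹) q r⁻¹ →ₐ[K] Ambiskew K c d q r,
      ∀ i, f (agen K _ _ _ _ i) = (![(c * d) • agen K c d q r 0, agen K c d q r 3,
        agen K c d q r 2, agen K c d q r 1] : Fin 4 → _) i := by
    obtain ⟨e41, e21, e13, e43, e23, e24⟩ := amb_rels K c d q r _ rfl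
    apply amb_lift <;> simp [Matrix.cons_val]
    · rw [e21]; module
    · rw [e41]; match_scalars; field_simp
    · rw [e13]; module
    · rw [e23]
    · rw [e43]; match_scalars; field_simp
    · rw [e24]; match_scalars <;> field_simp <;> ring
  obtain ⟨g, hg⟩ : ∃ g : Ambiskew K c d q r →ₐ[K] Ambiskew K (q⁻¹ * c⁻¹) (q * d⁻¹) q r⁻¹,
      ∀ i, g (agen K _ _ _ _ i) = (![(c * d)⁻¹ • agen K (q⁻¹ * c⁻¹) (q * d⁻¹) q r⁻¹ 0,
        agen K (q⁻¹ * c⁻¹) (q * d⁻¹) q r⁻¹ 3, agen K (q⁻¹ * c⁻¹) (q * d⁻¹) q r⁻¹ 2,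
        agen K (q⁻¹ * c⁻¹) (q * d⁻¹) q r⁻¹ 1] : Fin 4 → _) i := by
    obtain ⟨e41, e21, e13, e43, e23, e24⟩ := amb_rels K (q⁻¹ * c⁻¹) (q * d⁻¹) q r⁻¹ _ rfl
    apply amb_lift <;> simp only [Matrix.cons_val, mul_smul_comm, smul_mul_assoc]
    · rw [e21]; match_scalars; field_simp
    · rw [e41]; match_scalars; field_simp
    · rw [e13]; module
    · rw [e23]; match_scalars; field_simp
    · rw [e43]
    · rw [e24]; match_scalars <;> field_simp <;> ring
  have hfg : f.comp g = AlgHom.id K _ := by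
    apply amb_ext
    intro i
    fin_cases i <;> simp [hf, hg, smul_smul] <;> field_simp <;> simp
  have hgf : g.comp f = AlgHom.id K _ := by
    apply amb_ext
    intro i
    fin_cases i <;> simp [hf, hg, smul_smul] <;> field_simp <;> simp
  exact ⟨AlgEquiv.ofAlgHom f g hfg hgf, hf 0, hf 1, hf 2, hf 3⟩
end

section
/- Let K be a field and c, d, q₁, q₂ ∈ Kˣ. Then R(d, c, q₁⁻¹, q₂) is isomorphic to R(c, d, q₁, q₂) as K-algebras; an isomorphism is given by x₁ ↦ q₁·y₃, x₂ ↦ y₂, x₃ ↦ y₁, x₄ ↦ y₄, where x₁,…,x₄ are the generators of the source and y₁,…,y₄ those of the target. -/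
theorem agen_rels (K : Type*) [Field K] (a b p₁ p₂ : K) :
    (agen K a b p₁ p₂ 3 * agen K a b p₁ p₂ 0 = a • (agen K a b p₁ p₂ 0 * agen K a b p₁ p₂ 3)) ∧
    (agen K a b p₁ p₂ 1 * agen K a b p₁ p₂ 0 =
      (p₁⁻¹ * a⁻¹) • (agen K a b p₁ p₂ 0 * agen K a b p₁ p₂ 1)) ∧
    (agen K a b p₁ p₂ 0 * agen K a b p₁ p₂ 2 = p₁ • (agen K a b p₁ p₂ 2 * agen K a b p₁ p₂ 0)) ∧
    (agen K a b p₁ p₂ 3 * agen K a b p₁ p₂ 2 = b • (agen K a b p₁ p₂ 2 * agen K a b p₁ p₂ 3)) ∧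
    (agen K a b p₁ p₂ 1 * agen K a b p₁ p₂ 2 =
      (p₁ * b⁻¹) • (agen K a b p₁ p₂ 2 * agen K a b p₁ p₂ 1)) ∧
    (agen K a b p₁ p₂ 1 * agen K a b p₁ p₂ 3 = p₂ • (agen K a b p₁ p₂ 3 * agen K a b p₁ p₂ 1) +
      (1 - p₂ * a * b) • (agen K a b p₁ p₂ 0 * agen K a b p₁ p₂ 2)) := by
  refine ⟨?_, ?_, ?_, ?_, ?_, ?_⟩
  · simpa [agen] using RingQuot.mkAlgHom_rel K (AmbRel.r41 (K := K) (a := a) (b := b) (p₁ := p₁) (p₂ := p₂))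
  · simpa only [agen, map_mul, map_smul] using RingQuot.mkAlgHom_rel K (AmbRel.r21 (K := K) (a := a) (b := b) (p₁ := p₁) (p₂ := p₂))
  · simpa [agen] using RingQuot.mkAlgHom_rel K (AmbRel.r13 (K := K) (a := a) (b := b) (p₁ := p₁) (p₂ := p₂))
  · simpa [agen] using RingQuot.mkAlgHom_rel K (AmbRel.r43 (K := K) (a := a) (b := b) (p₁ := p₁) (p₂ := p₂))
  · simpa only [agen, map_mul, map_smul] using RingQuot.mkAlgHom_rel K (AmbRel.r23 (K := K) (a := a) (b := b) (p₁ := p₁) (p₂ := p₂))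
  · simpa only [agen, map_mul, map_smul, map_add] using RingQuot.mkAlgHom_rel K (AmbRel.r24 (K := K) (a := a) (b := b) (p₁ := p₁) (p₂ := p₂))

theorem swap_hom (K : Type*) [Field K] (a b p r p₂ s t : K) (hr : r = p⁻¹) (hp : p ≠ 0)
    (hst : s * t = r) :
    ∃ f : Ambiskew K a b p p₂ →ₐ[K] Ambiskew K b a r p₂,
      f (agen K a b p p₂ 0) = s • agen K b a r p₂ 2 ∧
      f (agen K a b p p₂ 1) = agen K b a r p₂ 1 ∧
      f (agen K a b p p₂ 2) = t • agen K b a r p₂ 0 ∧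
      f (agen K a b p p₂ 3) = agen K b a r p₂ 3 := by
  obtain ⟨h41, h21, h13, h43, h23, h24⟩ := agen_rels K b a r p₂
  let g : Fin 4 → Ambiskew K b a r p₂ :=
    ![s • agen K b a r p₂ 2, agen K b a r p₂ 1, t • agen K b a r p₂ 0, agen K b a r p₂ 3]
  have hg : ∀ ⦃x y⦄, AmbRel K a b p p₂ x y → FreeAlgebra.lift K g x = FreeAlgebra.lift K g y := by
    intro x y h
    cases h <;> simp only [map_mul, map_smul, map_add, FreeAlgebra.lift_ι_apply] <;>
      simp only [g, Matrix.cons_val, smul_mul_assoc, mul_smul_comm, smul_smul]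
    · rw [h43, smul_smul, mul_comm]
    · rw [h23, smul_smul, hr]; congr 1; ring
    · rw [h13, smul_smul]; congr 1; rw [hr]; field_simp
    · rw [h41, smul_smul, mul_comm]
    · rw [h21, smul_smul, hr, inv_inv]; congr 1; ring
    · rw [h24, h13, smul_smul]; congr 2; rw [← hst]; ring
  refine ⟨RingQuot.liftAlgHom K ⟨FreeAlgebra.lift K g, hg⟩, ?_, ?_, ?_, ?_⟩ <;>
    simp [agen, RingQuot.liftAlgHom_mkAlgHom_apply, g]

theorem amb_hom_id (K : Type*) [Field K] (a b p₁ p₂ : K)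
    (f : Ambiskew K a b p₁ p₂ →ₐ[K] Ambiskew K a b p₁ p₂)
    (h : ∀ i, f (agen K a b p₁ p₂ i) = agen K a b p₁ p₂ i) : f = AlgHom.id K _ := by
  apply RingQuot.ringQuot_ext'
  apply FreeAlgebra.hom_ext
  funext i
  exact h i

/-- `R(d, c, q₁⁻¹, q₂) ≅ R(c,d,q₁,q₂)` via
`x₁ ↦ q₁·y₃`, `x₂ ↦ y₂`, `x₃ ↦ y₁`, `x₄ ↦ y₄`. -/
theorem ambiskew_iso_three (K : Type*) [Field K] (c d q₁ q₂ : Kˣ) :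
    ∃ Φ : Ambiskew K (d : K) (c : K) ((q₁ : K)⁻¹) (q₂ : K)
        ≃ₐ[K] Ambiskew K (c : K) (d : K) (q₁ : K) (q₂ : K),
      Φ (agen K (d : K) (c : K) ((q₁ : K)⁻¹) (q₂ : K) 0) =
        (q₁ : K) • agen K (c : K) (d : K) (q₁ : K) (q₂ : K) 2 ∧
      Φ (agen K (d : K) (c : K) ((q₁ : K)⁻¹) (q₂ : K) 1) =
        agen K (c : K) (d : K) (q₁ : K) (q₂ : K) 1 ∧
      Φ (agen K (d : K) (c : K) ((q₁ : K)⁻¹) (q₂ : K) 2) =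
        agen K (c : K) (d : K) (q₁ : K) (q₂ : K) 0 ∧
      Φ (agen K (d : K) (c : K) ((q₁ : K)⁻¹) (q₂ : K) 3) =
        agen K (c : K) (d : K) (q₁ : K) (q₂ : K) 3 := by
  have hq : (q₁ : K) ≠ 0 := q₁.ne_zero
  obtain ⟨f, f0, f1, f2, f3⟩ := swap_hom K (d : K) c ((q₁ : K)⁻¹) q₁ q₂ q₁ 1
    (by simp) (by simp) (by simp)
  obtain ⟨g, g0, g1, g2, g3⟩ := swap_hom K (c : K) d q₁ ((q₁ : K)⁻¹) q₂ 1 ((q₁ : K)⁻¹)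
    rfl hq (by simp)
  refine ⟨AlgEquiv.ofAlgHom f g (amb_hom_id _ _ _ _ _ _ ?_) (amb_hom_id _ _ _ _ _ _ ?_),
    f0, f1, by simpa using f2, f3⟩
  · intro i
    fin_cases i <;> simp [f0, f1, f2, f3, g0, g1, g2, g3, smul_smul, hq]
  · intro i
    fin_cases i <;> simp [f0, f1, f2, f3, g0, g1, g2, g3, smul_smul, hq]
end

section
/- Let K be a field and c, d, q₁, q₂ ∈ Kˣ. Then R(q₁d⁻¹, q₁⁻¹c⁻¹, q₁⁻¹, q₂⁻¹) is isomorphic to R(c, d, q₁, q₂) as K-algebras; an isomorphism is given by x₁ ↦ q₁cd·y₃, x₂ ↦ y₄, x₃ ↦ y₁, x₄ ↦ y₂, where x₁,…,x₄ are the generators of the source and y₁,…,y₄ those of the target. -/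
/-- A four-tuple satisfying the defining relations. -/
structure AmbSat (K : Type*) [Field K] (a b p₁ p₂ : K) {A : Type*} [Ring A] [Algebra K A]
    (x₁ x₂ x₃ x₄ : A) : Prop where
  r41 : x₄ * x₁ = a • (x₁ * x₄)
  r21 : x₂ * x₁ = (p₁⁻¹ * a⁻¹) • (x₁ * x₂)
  r13 : x₁ * x₃ = p₁ • (x₃ * x₁)
  r43 : x₄ * x₃ = b • (x₃ * x₄)
  r23 : x₂ * x₃ = (p₁ * b⁻¹) • (x₃ * x₂)
  r24 : x₂ * x₄ = p₂ • (x₄ * x₂) + (1 - p₂ * a * b) • (x₁ * x₃)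

theorem agen_sat (K : Type*) [Field K] (a b p₁ p₂ : K) :
    AmbSat K a b p₁ p₂ (agen K a b p₁ p₂ 0) (agen K a b p₁ p₂ 1) (agen K a b p₁ p₂ 2)
      (agen K a b p₁ p₂ 3) := by
  constructor
  · simpa [agen] using RingQuot.mkAlgHom_rel K (AmbRel.r41 (K := K) (a := a) (b := b) (p₁ := p₁) (p₂ := p₂))
  · simpa only [agen, map_mul, map_smul] using RingQuot.mkAlgHom_rel K (AmbRel.r21 (K := K) (a := a) (b := b) (p₁ := p₁) (p₂ := p₂))
  · simpa only [agen, map_mul, map_smul] using RingQuot.mkAlgHom_rel K (AmbRel.r13 (K := K) (a := a) (b := b) (p₁ := p₁) (p₂ := p₂))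
  · simpa only [agen, map_mul, map_smul] using RingQuot.mkAlgHom_rel K (AmbRel.r43 (K := K) (a := a) (b := b) (p₁ := p₁) (p₂ := p₂))
  · simpa only [agen, map_mul, map_smul] using RingQuot.mkAlgHom_rel K (AmbRel.r23 (K := K) (a := a) (b := b) (p₁ := p₁) (p₂ := p₂))
  · simpa only [agen, map_mul, map_smul, map_add] using RingQuot.mkAlgHom_rel K (AmbRel.r24 (K := K) (a := a) (b := b) (p₁ := p₁) (p₂ := p₂))

theorem amb_lift_s3 {K : Type*} [Field K] {a b p₁ p₂ : K} {A : Type*} [Ring A] [Algebra K A]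
    {x₁ x₂ x₃ x₄ : A} (h : AmbSat K a b p₁ p₂ x₁ x₂ x₃ x₄) :
    ∃ f : Ambiskew K a b p₁ p₂ →ₐ[K] A, f (agen K a b p₁ p₂ 0) = x₁ ∧
      f (agen K a b p₁ p₂ 1) = x₂ ∧ f (agen K a b p₁ p₂ 2) = x₃ ∧
      f (agen K a b p₁ p₂ 3) = x₄ := by
  refine ⟨RingQuot.liftAlgHom K ⟨FreeAlgebra.lift K ![x₁, x₂, x₃, x₄], ?_⟩, ?_, ?_, ?_, ?_⟩
  · intro x y hxy
    cases hxy
    · simpa using h.r41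
    · simp only [map_mul, map_smul, FreeAlgebra.lift_ι_apply]; exact h.r21
    · simpa using h.r13
    · simpa using h.r43
    · simp only [map_mul, map_smul, FreeAlgebra.lift_ι_apply]; exact h.r23
    · simp only [map_mul, map_smul, map_add, FreeAlgebra.lift_ι_apply]; exact h.r24
  all_goals simp [agen]

theorem amb_hom_ext {K : Type*} [Field K] {a b p₁ p₂ : K} {A : Type*} [Ring A] [Algebra K A]
    {f g : Ambiskew K a b p₁ p₂ →ₐ[K] A}
    (h0 : f (agen K a b p₁ p₂ 0) = g (agen K a b p₁ p₂ 0))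
    (h1 : f (agen K a b p₁ p₂ 1) = g (agen K a b p₁ p₂ 1))
    (h2 : f (agen K a b p₁ p₂ 2) = g (agen K a b p₁ p₂ 2))
    (h3 : f (agen K a b p₁ p₂ 3) = g (agen K a b p₁ p₂ 3)) : f = g := by
  apply RingQuot.ringQuot_ext'
  apply FreeAlgebra.hom_ext
  funext i
  fin_cases i
  · exact h0
  · exact h1
  · exact h2
  · exact h3

theorem amb_sat_fwd {K : Type*} [Field K] {c d q₁ q₂ : K} (hc : c ≠ 0) (hd : d ≠ 0)
    (h₁ : q₁ ≠ 0) (h₂ : q₂ ≠ 0) {A : Type*} [Ring A] [Algebra K A]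
    {y₁ y₂ y₃ y₄ : A} (h : AmbSat K c d q₁ q₂ y₁ y₂ y₃ y₄) :
    AmbSat K (q₁ * d⁻¹) (q₁⁻¹ * c⁻¹) q₁⁻¹ q₂⁻¹ ((q₁ * c * d) • y₃) y₄ y₁ y₂ := by
  constructor
  · rw [mul_smul_comm, smul_mul_assoc, h.r23]; module
  · rw [mul_smul_comm, smul_mul_assoc, h.r43]; match_scalars; field_simp
  · rw [mul_smul_comm, smul_mul_assoc, h.r13]; match_scalars; field_simp
  · rw [h.r21]
  · rw [h.r41]; match_scalars; field_simp
  · rw [smul_mul_assoc, h.r24, h.r13]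
    match_scalars <;> field_simp
    ring

theorem amb_sat_bwd {K : Type*} [Field K] {c d q₁ q₂ : K} (hc : c ≠ 0) (hd : d ≠ 0)
    (h₁ : q₁ ≠ 0) (h₂ : q₂ ≠ 0) {A : Type*} [Ring A] [Algebra K A]
    {x₁ x₂ x₃ x₄ : A} (h : AmbSat K (q₁ * d⁻¹) (q₁⁻¹ * c⁻¹) q₁⁻¹ q₂⁻¹ x₁ x₂ x₃ x₄) :
    AmbSat K c d q₁ q₂ x₃ x₄ ((q₁ * c * d)⁻¹ • x₁) x₂ := by
  constructor
  · rw [h.r23]; match_scalars; field_simp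
  · rw [h.r43]
  · rw [mul_smul_comm, smul_mul_assoc, h.r13]; match_scalars; field_simp
  · rw [mul_smul_comm, smul_mul_assoc, h.r21]; match_scalars; field_simp
  · rw [mul_smul_comm, smul_mul_assoc, h.r41]; match_scalars; field_simp
  · rw [mul_smul_comm, h.r24, h.r13]
    match_scalars <;> field_simp
    ring

/-- `R(q₁d⁻¹, q₁⁻¹c⁻¹, q₁⁻¹, q₂⁻¹) ≅ R(c,d,q₁,q₂)` via
`x₁ ↦ q₁cd·y₃`, `x₂ ↦ y₄`, `x₃ ↦ y₁`, `x₄ ↦ y₂`. -/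
theorem ambiskew_iso_four (K : Type*) [Field K] (c d q₁ q₂ : Kˣ) :
    ∃ Φ : Ambiskew K ((q₁ : K) * (d : K)⁻¹) ((q₁ : K)⁻¹ * (c : K)⁻¹) ((q₁ : K)⁻¹) ((q₂ : K)⁻¹)
        ≃ₐ[K] Ambiskew K (c : K) (d : K) (q₁ : K) (q₂ : K),
      Φ (agen K ((q₁ : K) * (d : K)⁻¹) ((q₁ : K)⁻¹ * (c : K)⁻¹) ((q₁ : K)⁻¹) ((q₂ : K)⁻¹) 0) =
        ((q₁ : K) * (c : K) * (d : K)) • agen K (c : K) (d : K) (q₁ : K) (q₂ : K) 2 ∧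
      Φ (agen K ((q₁ : K) * (d : K)⁻¹) ((q₁ : K)⁻¹ * (c : K)⁻¹) ((q₁ : K)⁻¹) ((q₂ : K)⁻¹) 1) =
        agen K (c : K) (d : K) (q₁ : K) (q₂ : K) 3 ∧
      Φ (agen K ((q₁ : K) * (d : K)⁻¹) ((q₁ : K)⁻¹ * (c : K)⁻¹) ((q₁ : K)⁻¹) ((q₂ : K)⁻¹) 2) =
        agen K (c : K) (d : K) (q₁ : K) (q₂ : K) 0 ∧
      Φ (agen K ((q₁ : K) * (d : K)⁻¹) ((q₁ : K)⁻¹ * (c : K)⁻¹) ((q₁ : K)⁻¹) ((q₂ : K)⁻¹) 3) =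
        agen K (c : K) (d : K) (q₁ : K) (q₂ : K) 1 := by
  have hc := c.ne_zero
  have hd := d.ne_zero
  have h₁ := q₁.ne_zero
  have h₂ := q₂.ne_zero
  have hl : (q₁ : K) * c * d ≠ 0 := mul_ne_zero (mul_ne_zero h₁ hc) hd
  obtain ⟨f, f0, f1, f2, f3⟩ := amb_lift_s3 (amb_sat_fwd hc hd h₁ h₂ (agen_sat K (c : K) d q₁ q₂))
  obtain ⟨g, g0, g1, g2, g3⟩ := amb_lift_s3 (amb_sat_bwd hc hd h₁ h₂
    (agen_sat K ((q₁ : K) * (d : K)⁻¹) ((q₁ : K)⁻¹ * (c : K)⁻¹) ((q₁ : K)⁻¹) ((q₂ : K)⁻¹)))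
  refine ⟨AlgEquiv.ofAlgHom f g ?_ ?_, f0, f1, f2, f3⟩
  · apply amb_hom_ext
    · rw [AlgHom.comp_apply, g0, f2, AlgHom.id_apply]
    · rw [AlgHom.comp_apply, g1, f3, AlgHom.id_apply]
    · rw [AlgHom.comp_apply, g2, map_smul, f0, AlgHom.id_apply, inv_smul_smul₀ hl]
    · rw [AlgHom.comp_apply, g3, f1, AlgHom.id_apply]
  · apply amb_hom_ext
    · rw [AlgHom.comp_apply, f0, map_smul, g2, AlgHom.id_apply, smul_inv_smul₀ hl]
    · rw [AlgHom.comp_apply, f1, g3, AlgHom.id_apply]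
    · rw [AlgHom.comp_apply, f2, g0, AlgHom.id_apply]
    · rw [AlgHom.comp_apply, f3, g1, AlgHom.id_apply]
end

section
/- Let K be a field and c, d, q₁, q₂ ∈ Kˣ. The Jordan matrix algebra O_J(M_2(K)) is not isomorphic to R(c, d, q₁, q₂) as a K-algebra. -/
/-- The defining relations of the Jordan matrix algebra `O_J(M₂(K))`, with
generators `x₁ = ι 0`, `x₂ = ι 1`, `x₃ = ι 2`, `x₄ = ι 3`. Each of the six
defining expressions is set equal to `0`. -/
inductive JordanMatRel (K : Type*) [Field K] :
    FreeAlgebra K (Fin 4) → FreeAlgebra K (Fin 4) → Prop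
  | r1 : JordanMatRel K
      (FreeAlgebra.ι K 0 * FreeAlgebra.ι K 2 - FreeAlgebra.ι K 2 * FreeAlgebra.ι K 0 +
        FreeAlgebra.ι K 2 * FreeAlgebra.ι K 2) 0
  | r2 : JordanMatRel K
      (FreeAlgebra.ι K 0 * FreeAlgebra.ι K 1 - FreeAlgebra.ι K 1 * FreeAlgebra.ι K 0 -
        FreeAlgebra.ι K 0 * FreeAlgebra.ι K 2 + FreeAlgebra.ι K 0 * FreeAlgebra.ι K 3 -
        FreeAlgebra.ι K 1 * FreeAlgebra.ι K 2 - FreeAlgebra.ι K 0 * FreeAlgebra.ι K 0) 0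
  | r3 : JordanMatRel K
      (FreeAlgebra.ι K 3 * FreeAlgebra.ι K 2 - FreeAlgebra.ι K 2 * FreeAlgebra.ι K 3 +
        FreeAlgebra.ι K 2 * FreeAlgebra.ι K 2) 0
  | r4 : JordanMatRel K
      (FreeAlgebra.ι K 1 * FreeAlgebra.ι K 3 - FreeAlgebra.ι K 3 * FreeAlgebra.ι K 1 +
        FreeAlgebra.ι K 0 * FreeAlgebra.ι K 2 - FreeAlgebra.ι K 0 * FreeAlgebra.ι K 3 +
        FreeAlgebra.ι K 1 * FreeAlgebra.ι K 2 + FreeAlgebra.ι K 3 * FreeAlgebra.ι K 3) 0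
  | r5 : JordanMatRel K
      (FreeAlgebra.ι K 1 * FreeAlgebra.ι K 2 - FreeAlgebra.ι K 2 * FreeAlgebra.ι K 1 +
        FreeAlgebra.ι K 0 * FreeAlgebra.ι K 2 + FreeAlgebra.ι K 2 * FreeAlgebra.ι K 3) 0
  | r6 : JordanMatRel K
      (FreeAlgebra.ι K 0 * FreeAlgebra.ι K 3 - FreeAlgebra.ι K 3 * FreeAlgebra.ι K 0 -
        FreeAlgebra.ι K 0 * FreeAlgebra.ι K 2 + FreeAlgebra.ι K 2 * FreeAlgebra.ι K 3 -
        FreeAlgebra.ι K 2 * FreeAlgebra.ι K 2) 0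

/-- The Jordan matrix algebra `O_J(M₂(K))`. -/
abbrev JordanMat (K : Type*) [Field K] := RingQuot (JordanMatRel K)

open Polynomial in
/-- The algebra map `R → K[X]` onto the `i`-th coordinate axis. -/
noncomputable def axisHom (K : Type*) [Field K] (a b p₁ p₂ : K) (i : Fin 4) :
    Ambiskew K a b p₁ p₂ →ₐ[K] Polynomial K :=
  RingQuot.liftAlgHom K ⟨FreeAlgebra.lift K (fun j => if j = i then (X : Polynomial K) else 0), by
    intro x y h
    cases h <;> simp only [map_mul, map_add, map_smul, FreeAlgebra.lift_ι_apply] <;>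
      fin_cases i <;> simp⟩

theorem axisHom_agen (K : Type*) [Field K] (a b p₁ p₂ : K) (i j : Fin 4) :
    axisHom K a b p₁ p₂ i (agen K a b p₁ p₂ j) =
      if j = i then (Polynomial.X : Polynomial K) else 0 := by
  simp [axisHom, agen]

/-- The constant term does not depend on the axis. -/
theorem axisHom_coeff_zero (K : Type*) [Field K] (a b p₁ p₂ : K) (i : Fin 4)
    (r : Ambiskew K a b p₁ p₂) :
    (axisHom K a b p₁ p₂ i r).coeff 0 = (axisHom K a b p₁ p₂ 0 r).coeff 0 := by
  have h : ((Polynomial.aeval (0 : K)).comp (axisHom K a b p₁ p₂ i)) =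
      ((Polynomial.aeval (0 : K)).comp (axisHom K a b p₁ p₂ 0)) := by
    apply RingQuot.ringQuot_ext'
    apply FreeAlgebra.hom_ext
    funext j
    have h1 := axisHom_agen K a b p₁ p₂ i j
    have h2 := axisHom_agen K a b p₁ p₂ 0 j
    unfold agen at h1 h2
    simp only [Function.comp_apply, AlgHom.comp_apply, h1, h2]
    split_ifs <;> simp
  have h' := DFunLike.congr_fun h r
  simpa [Polynomial.coeff_zero_eq_aeval_zero] using h'

/-- The linear part of an element of `R`. -/
noncomputable def linPart (K : Type*) [Field K] (a b p₁ p₂ : K) (r : Ambiskew K a b p₁ p₂) :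
    Fin 4 → K := fun i => (axisHom K a b p₁ p₂ i r).coeff 1

theorem linPart_mul (K : Type*) [Field K] (a b p₁ p₂ : K) (r s : Ambiskew K a b p₁ p₂) :
    linPart K a b p₁ p₂ (r * s) =
      (axisHom K a b p₁ p₂ 0 r).coeff 0 • linPart K a b p₁ p₂ s +
      (axisHom K a b p₁ p₂ 0 s).coeff 0 • linPart K a b p₁ p₂ r := by
  funext i
  simp only [linPart, map_mul, Pi.add_apply, Pi.smul_apply, smul_eq_mul,
    Polynomial.mul_coeff_one, axisHom_coeff_zero K a b p₁ p₂ i]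
  ring

/-- the Jordan matrix algebra `O_J(M₂(K))` is not isomorphic to
any of the ambiskew polynomial rings `R(c,d,q₁,q₂)`. -/
theorem jordanMat_not_iso_ambiskew (K : Type*) [Field K] (c d q₁ q₂ : Kˣ) :
    IsEmpty (JordanMat K ≃ₐ[K] Ambiskew K (c : K) (d : K) (q₁ : K) (q₂ : K)) := by
  refine ⟨fun φ => ?_⟩
  let g : Fin 4 → JordanMat K := fun i => RingQuot.mkAlgHom K (JordanMatRel K) (FreeAlgebra.ι K i)
  let D : JordanMat K → (Fin 4 → K) := fun x => linPart K (c : K) d q₁ q₂ (φ x)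
  have h3 : D (g 2) = 0 := by
    have hr : g 0 * g 2 - g 2 * g 0 + g 2 * g 2 = 0 := by
      have := RingQuot.mkAlgHom_rel K (JordanMatRel.r1 (K := K))
      simpa only [map_add, map_sub, map_mul, map_zero] using this
    funext i
    have h := congrArg (fun x => axisHom K (c : K) d q₁ q₂ i (φ x)) hr
    simp only [map_add, map_sub, map_mul, map_zero] at h
    rw [mul_comm, sub_self, zero_add, mul_self_eq_zero] at h
    simp [D, linPart, h]
  let v : Fin 3 → (Fin 4 → K) := ![D (g 0), D (g 1), D (g 3)]
  have hspan : ∀ f : FreeAlgebra K (Fin 4),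
      D (RingQuot.mkAlgHom K (JordanMatRel K) f) ∈ Submodule.span K (Set.range v) := by
    intro f
    induction f using FreeAlgebra.induction with
    | grade0 r =>
      have : D (RingQuot.mkAlgHom K (JordanMatRel K) (algebraMap K _ r)) = 0 := by
        funext i
        simp only [D, linPart, AlgHom.commutes, AlgEquiv.commutes]
        simp
      rw [this]
      exact Submodule.zero_mem _
    | grade1 j =>
      change D (g j) ∈ _
      fin_cases j
      · exact Submodule.subset_span ⟨0, rfl⟩
      · exact Submodule.subset_span ⟨1, rfl⟩
      · change D (g 2) ∈ _
        rw [h3]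
        exact Submodule.zero_mem _
      · exact Submodule.subset_span ⟨2, rfl⟩
    | mul x y hx hy =>
      simp only [D, map_mul, linPart_mul]
      exact Submodule.add_mem _ (Submodule.smul_mem _ _ hy) (Submodule.smul_mem _ _ hx)
    | add x y hx hy =>
      have : D (RingQuot.mkAlgHom K (JordanMatRel K) (x + y)) =
          D (RingQuot.mkAlgHom K (JordanMatRel K) x) +
          D (RingQuot.mkAlgHom K (JordanMatRel K) y) := by
        funext i
        simp [D, linPart]
      rw [this]
      exact Submodule.add_mem _ hx hy
  have htop : Submodule.span K (Set.range v) = ⊤ := by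
    rw [eq_top_iff, ← (Pi.basisFun K (Fin 4)).span_eq, Submodule.span_le]
    rintro _ ⟨i, rfl⟩
    obtain ⟨f, hf⟩ := RingQuot.mkAlgHom_surjective K (JordanMatRel K)
      (φ.symm (agen K (c : K) d q₁ q₂ i))
    have h := hspan f
    rw [hf] at h
    rw [SetLike.mem_coe]
    convert h using 1
    funext j
    simp only [D, linPart, AlgEquiv.apply_symm_apply, axisHom_agen, Pi.basisFun_apply,
      Pi.single_apply]
    by_cases hij : i = j
    · simp [hij]
    · simp [hij, Ne.symm hij]
  have hle := finrank_range_le_card (R := K) v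
  rw [Set.finrank, htop, finrank_top] at hle
  simp at hle
end

section
/- Let K be a field and p, q ∈ Kˣ with p = q⁻¹. Then the quantum Weyl algebras A_1^p(K) and A_1^q(K) are isomorphic as K-algebras; an isomorphism is given by sending the generator X of A_1^p(K) to q·y and the generator Y to −x, where x, y are the generators of A_1^q(K). -/
/-- The defining relation of the quantum Weyl algebra `A_1^q(K)`:
`x * y = q • (y * x) + 1`, where `x, y` are the two free generators. -/
inductive WeylRel (K : Type*) [Field K] (q : K) :
    FreeAlgebra K (Fin 2) → FreeAlgebra K (Fin 2) → Prop
  | rel : WeylRel K q (FreeAlgebra.ι K 0 * FreeAlgebra.ι K 1)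
      (q • (FreeAlgebra.ι K 1 * FreeAlgebra.ι K 0) + 1)

/-- The quantum Weyl algebra `A_1^q(K)`. -/
abbrev QuantumWeyl (K : Type*) [Field K] (q : K) := RingQuot (WeylRel K q)

/-- The images of the two free generators in `A_1^q(K)`; `wgen K q 0` is `x`
and `wgen K q 1` is `y`. -/
noncomputable def wgen (K : Type*) [Field K] (q : K) (i : Fin 2) : QuantumWeyl K q :=
  RingQuot.mkAlgHom K (WeylRel K q) (FreeAlgebra.ι K i)

theorem wgen_rel (K : Type*) [Field K] (q : K) :
    wgen K q 0 * wgen K q 1 = q • (wgen K q 1 * wgen K q 0) + 1 := by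
  have := RingQuot.mkAlgHom_rel K (WeylRel.rel (K := K) (q := q))
  simpa [wgen] using this

theorem exists_wlift (K : Type*) [Field K] (q : K) {A : Type*} [Ring A] [Algebra K A]
    (a b : A) (hab : a * b = q • (b * a) + 1) :
    ∃ f : QuantumWeyl K q →ₐ[K] A, f (wgen K q 0) = a ∧ f (wgen K q 1) = b := by
  refine ⟨RingQuot.liftAlgHom K ⟨FreeAlgebra.lift K ![a, b], ?_⟩, ?_, ?_⟩
  · rintro _ _ ⟨⟩
    simpa using hab
  · simp [wgen]
  · simp [wgen]

theorem wgen_hom_ext (K : Type*) [Field K] (q : K) {A : Type*} [Ring A] [Algebra K A]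
    (f g : QuantumWeyl K q →ₐ[K] A) (h0 : f (wgen K q 0) = g (wgen K q 0))
    (h1 : f (wgen K q 1) = g (wgen K q 1)) : f = g := by
  apply RingQuot.ringQuot_ext'
  apply FreeAlgebra.hom_ext
  funext i
  fin_cases i
  · exact h0
  · exact h1

theorem weyl_aux1 {K A : Type*} [Field K] [Ring A] [Algebra K A] (p q : K) (hpq : p * q = 1)
    (x y : A) (hxy : x * y = q • (y * x) + 1) :
    (q • y) * (-x) = p • ((-x) * (q • y)) + 1 := by
  simp only [smul_mul_assoc, mul_neg, neg_mul, mul_smul_comm, smul_neg, smul_smul, hpq, one_smul,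
    hxy]
  abel

theorem weyl_aux2 {K A : Type*} [Field K] [Ring A] [Algebra K A] (p q : K) (hqp : q * p = 1)
    (x y : A) (hxy : x * y = p • (y * x) + 1) :
    (-y) * (p • x) = q • ((p • x) * (-y)) + 1 := by
  simp only [smul_mul_assoc, mul_neg, neg_mul, mul_smul_comm, smul_neg, smul_smul, hqp, one_smul,
    hxy]
  abel

/-- if `p = q⁻¹` then `A_1^p(K) ≅ A_1^q(K)`, via `X ↦ q·y`, `Y ↦ -x`. -/
theorem quantumWeyl_iso_of_inv (K : Type*) [Field K] (p q : Kˣ) (h : p = q⁻¹) :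
    ∃ Φ : QuantumWeyl K (p : K) ≃ₐ[K] QuantumWeyl K (q : K),
      Φ (wgen K (p : K) 0) = (q : K) • wgen K (q : K) 1 ∧
      Φ (wgen K (p : K) 1) = - wgen K (q : K) 0 := by
  have hpq : (p : K) * q = 1 := by simp [h]
  have hqp : (q : K) * p = 1 := by simp [h]
  obtain ⟨f, f0, f1⟩ := exists_wlift K (p : K) ((q : K) • wgen K (q : K) 1) (- wgen K (q : K) 0)
    (weyl_aux1 (p : K) q hpq _ _ (wgen_rel K (q : K)))
  obtain ⟨g, g0, g1⟩ := exists_wlift K (q : K) (- wgen K (p : K) 1) ((p : K) • wgen K (p : K) 0)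
    (weyl_aux2 (p : K) q hqp _ _ (wgen_rel K (p : K)))
  refine ⟨AlgEquiv.ofAlgHom f g ?_ ?_, f0, f1⟩
  · apply wgen_hom_ext <;> simp [f0, f1, g0, g1, smul_smul, hpq]
  · apply wgen_hom_ext <;> simp [f0, f1, g0, g1, smul_smul, hqp]
end

section
/- Let K be a field of characteristic 0 and let p, q ∈ Kˣ, neither of which is a root of unity. If the quantum Weyl algebras A_1^p(K) and A_1^q(K) are isomorphic as K-algebras, then p = q or p = q⁻¹. -/
/-- Matrices of the form `[[σ f, g], [0, f]]`. -/
def twSub {K L : Type*} [Field K] [CommRing L] [Algebra K L] (σ : L →ₐ[K] L) :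
    Subalgebra K (Matrix (Fin 2) (Fin 2) L) where
  carrier := {M | M 1 0 = 0 ∧ M 0 0 = σ (M 1 1)}
  mul_mem' := by
    rintro a b ⟨ha, ha'⟩ ⟨hb, hb'⟩
    simp [Matrix.mul_apply, Fin.sum_univ_two, ha, ha', hb, hb']
  add_mem' := by
    rintro a b ⟨ha, ha'⟩ ⟨hb, hb'⟩
    simp [ha, ha', hb, hb']
  algebraMap_mem' := by
    intro r
    simp [Matrix.algebraMap_matrix_apply]

/-- If the images of the generators commute, the whole image is commutative. -/
theorem image_comm {K B : Type*} [Field K] [Ring B] [Algebra K B] (p : K)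
    (ψ : QuantumWeyl K p →ₐ[K] B)
    (h : Commute (ψ (wgen K p 0)) (ψ (wgen K p 1))) (a b : QuantumWeyl K p) :
    Commute (ψ a) (ψ b) := by
  have h1 : ∀ i j, Commute (ψ (wgen K p i)) (ψ (wgen K p j)) := by
    intro i j
    fin_cases i <;> fin_cases j
    · exact Commute.refl _
    · exact h
    · exact h.symm
    · exact Commute.refl _
  obtain ⟨a, rfl⟩ := RingQuot.mkAlgHom_surjective K (WeylRel K p) a
  obtain ⟨b, rfl⟩ := RingQuot.mkAlgHom_surjective K (WeylRel K p) b
  have h2 : ∀ i, Commute (ψ (wgen K p i)) (ψ (RingQuot.mkAlgHom K (WeylRel K p) b)) := by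
    intro i
    induction b using FreeAlgebra.induction with
    | grade0 r => simpa using Algebra.commute_algebraMap_right r _
    | grade1 j => exact h1 i j
    | mul x y hx hy => simpa using hx.mul_right hy
    | add x y hx hy => simpa using hx.add_right hy
  induction a using FreeAlgebra.induction with
  | grade0 r => simpa using Algebra.commute_algebraMap_left r _
  | grade1 j => exact h2 j
  | mul x y hx hy => simpa using hx.mul_left hy
  | add x y hx hy => simpa using hx.add_left hy

theorem weyl_core {K L : Type*} [Field K] [CommRing L] [Nontrivial L] [Algebra K L]
    (σ : L →ₐ[K] L) (t : Lˣ) (p q : Kˣ) (hq1 : (q : K) ≠ 1)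
    (hσ : σ (t : L) = (q : K) • (t : L))
    (hunit : ∀ f : L, IsUnit f → ∃ n : ℤ, σ f = ((q ^ n : Kˣ) : K) • f)
    (e : QuantumWeyl K (p : K) ≃ₐ[K] QuantumWeyl K (q : K)) : ∃ n : ℤ, p = q ^ n := by
  have hd : (q : K) - 1 ≠ 0 := sub_ne_zero.mpr hq1
  have hq0 : (q : K) ≠ 0 := q.ne_zero
  set d : K := ((q : K) - 1)⁻¹ with hdd
  set s : L := ((t⁻¹ : Lˣ) : L) with hs
  have hts : (t : L) * s = 1 := by simp [hs]
  have hst : s * (t : L) = 1 := by simp [hs]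
  have hσs : σ s = (q : K)⁻¹ • s := by
    have h1 : σ (t : L) * σ s = 1 := by rw [← map_mul, hts, map_one]
    rw [hσ] at h1
    calc σ s = (q : K)⁻¹ • (s * ((q : K) • (t : L) * σ s)) := by
          rw [smul_mul_assoc, mul_smul_comm, ← mul_assoc, hst, one_mul, smul_smul,
            inv_mul_cancel₀ hq0, one_smul]
      _ = _ := by rw [h1, mul_one]
  let X : twSub σ := ⟨!![(q : K) • (t : L), 0; 0, (t : L)], by
    constructor <;> simp [hσ]⟩
  let Y : twSub σ := ⟨!![-((d * (q : K)⁻¹) • s), d • s; 0, -(d • s)], by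
    constructor <;> simp [hσs, smul_smul]⟩
  have hXY : X * Y = (q : K) • (Y * X) + 1 := by
    apply Subtype.ext
    ext i j
    have hh : (q : K) * d - d = 1 := by rw [hdd]; field_simp
    have hh' : (q : K) • d • (1 : L) - d • (1 : L) = 1 := by
      rw [smul_smul, ← sub_smul, hh, one_smul]
    have e1 : (q : K) * (d * (q : K)⁻¹) = d := by field_simp
    have e2 : d * (q : K)⁻¹ * (q : K) = d := by field_simp
    have e3 : -(d • (1 : L)) = -(((q : K) * d) • (1 : L)) + 1 := by
      rw [smul_smul] at hh'
      linear_combination hh'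
    fin_cases i <;> fin_cases j <;>
      simp [X, Y, Matrix.mul_apply, Fin.sum_univ_two, hts, hst, smul_smul, e1, e2]
    all_goals first | exact e3 | (rw [mul_comm d]; exact e3) | exact mul_comm _ _ | skip
  let ρ : QuantumWeyl K (q : K) →ₐ[K] twSub σ :=
    RingQuot.liftAlgHom K ⟨FreeAlgebra.lift K ![X, Y], by
      rintro _ _ ⟨⟩
      simpa using hXY⟩
  have hρ0 : ρ (wgen K q 0) = X := by simp [ρ, wgen, RingQuot.liftAlgHom_mkAlgHom_apply]
  have hρ1 : ρ (wgen K q 1) = Y := by simp [ρ, wgen, RingQuot.liftAlgHom_mkAlgHom_apply]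
  let ψ : QuantumWeyl K (p : K) →ₐ[K] twSub σ := ρ.comp e.toAlgHom
  have hncomm : ¬ Commute (ψ (wgen K p 0)) (ψ (wgen K p 1)) := by
    intro hc
    have h1 := image_comm _ ψ hc (e.symm (wgen K q 0)) (e.symm (wgen K q 1))
    have h2 : X * Y = Y * X := by
      have := h1.eq
      simpa [ψ, hρ0, hρ1] using this
    have h3 := congrArg (fun M : twSub σ => M.1 0 1) h2
    simp [X, Y, Matrix.mul_apply, Fin.sum_univ_two, hts, hst] at h3
    have hh : (q : K) * d - d = 1 := by rw [hdd]; field_simp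
    have hh' : (q : K) • d • (1 : L) - d • (1 : L) = 1 := by
      rw [smul_smul, ← sub_smul, hh, one_smul]
    rw [smul_comm, h3, sub_self] at hh'
    exact zero_ne_one hh'
  have hrel := congrArg ψ (wgen_rel K (p : K))
  simp only [map_mul, map_add, map_smul, map_one] at hrel
  obtain ⟨⟨M, hM0, hM1⟩, hM⟩ : ∃ M, M = ψ (wgen K p 0) := ⟨_, rfl⟩
  obtain ⟨⟨N, hN0, hN1⟩, hN⟩ : ∃ N, N = ψ (wgen K p 1) := ⟨_, rfl⟩
  rw [← hM, ← hN] at hrel hncomm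
  have hrel' : M * N = (p : K) • (N * M) + 1 := congrArg Subtype.val hrel
  have r11 := congrFun (congrFun hrel' 1) 1
  have r01 := congrFun (congrFun hrel' 0) 1
  simp [Matrix.mul_apply, Fin.sum_univ_two, hM0, hN0] at r11 r01
  have hu : IsUnit (M 1 1) := by
    refine IsUnit.of_mul_eq_one ((1 - (p : K)) • N 1 1) ?_
    rw [mul_smul_comm, sub_smul, one_smul, Algebra.smul_def]
    rw [Algebra.smul_def] at r11
    linear_combination r11
  obtain ⟨n, hn⟩ := hunit _ hu
  refine ⟨n, ?_⟩
  -- the off-diagonal entry of the commutator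
  set f := M 1 1
  set g := N 1 1
  set h : L := (M 0 0 * N 0 1 + M 0 1 * g) - (N 0 0 * M 0 1 + N 0 1 * f) with hh
  have hne : h ≠ 0 := by
    intro h0
    apply hncomm
    apply Subtype.ext
    change M * N = N * M
    ext i j
    fin_cases i <;> fin_cases j <;> simp [Matrix.mul_apply, Fin.sum_univ_two, hM0, hN0]
    · ring
    · exact sub_eq_zero.mp h0
    · ring
  have hkey : (((q ^ n : Kˣ) : K) - (p : K)) • h = 0 := by
    have r00 := congrFun (congrFun hrel' 0) 0
    simp [Matrix.mul_apply, Fin.sum_univ_two, hM0, hN0] at r00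
    rw [hn] at hM1
    simp only [Algebra.smul_def] at r00 r01 r11 hM1 ⊢
    have k1 : M 0 0 * h - algebraMap K L p * h * f = 0 := by
      rw [hh]
      set P := algebraMap K L (p : K)
      linear_combination (M 0 0 - P * f + (P - 1) * f) * r01 - M 0 1 * r00 + M 0 1 * r11
    apply hu.mul_left_cancel
    rw [map_sub]
    linear_combination k1 - h * hM1
  rcases smul_eq_zero.mp hkey with h1 | h1
  · exact Units.ext (sub_eq_zero.mp h1).symm
  · exact absurd h1 hne

open LaurentPolynomial in
theorem laurent_unit {K : Type*} [Field K] (f : K[T;T⁻¹]) (hf : IsUnit f) :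
    ∃ (c : K) (n : ℤ), f = C c * T n := by
  obtain ⟨g, hfg⟩ := hf.exists_right_inv
  obtain ⟨n, f', hf'⟩ := exists_T_pow f
  obtain ⟨m, g', hg'⟩ := exists_T_pow g
  have h1 : f' * g' = Polynomial.X ^ (n + m) := by
    apply Polynomial.toLaurent_injective
    rw [map_mul, hf', hg', Polynomial.toLaurent_X_pow]
    push_cast
    rw [T_add, mul_mul_mul_comm, hfg, one_mul]
  obtain ⟨i, -, hi⟩ := (dvd_prime_pow Polynomial.prime_X _).mp (Dvd.intro _ h1)
  obtain ⟨u, hu⟩ := hi.symm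
  obtain ⟨c, -, hc⟩ := Polynomial.isUnit_iff.mp u.isUnit
  refine ⟨c, i - n, ?_⟩
  have h2 : f * T n = C c * T i := by
    rw [← hf', ← hu, ← hc, map_mul, Polynomial.toLaurent_X_pow, Polynomial.toLaurent_C, T_mul]
  rw [T_sub, ← mul_assoc, ← h2, mul_T_assoc]
  simp

open LaurentPolynomial in
theorem weyl_pow {K : Type*} [Field K] (p q : Kˣ) (hq1 : (q : K) ≠ 1)
    (e : QuantumWeyl K (p : K) ≃ₐ[K] QuantumWeyl K (q : K)) : ∃ n : ℤ, p = q ^ n := by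
  let t : (K[T;T⁻¹])ˣ := ⟨T 1, T (-1), by rw [← T_add]; simp, by rw [← T_add]; simp⟩
  let u : (K[T;T⁻¹])ˣ := Units.map (C : K →+* K[T;T⁻¹]).toMonoidHom q * t
  have ht : ∀ n : ℤ, ((t ^ n : (K[T;T⁻¹])ˣ) : K[T;T⁻¹]) = T n := by
    intro n
    induction n using Int.induction_on with
    | zero => simp
    | succ i ih => rw [zpow_add_one, Units.val_mul, ih, T_add]
    | pred i ih => rw [zpow_sub_one, Units.val_mul, ih, T_sub]; rfl
  have hu : ∀ n : ℤ, ((u ^ n : (K[T;T⁻¹])ˣ) : K[T;T⁻¹]) = C ((q ^ n : Kˣ) : K) * T n := by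
    intro n
    simp only [u]
    rw [mul_zpow, Units.val_mul, ht, ← map_zpow]
    rfl
  let σ : K[T;T⁻¹] →ₐ[K] K[T;T⁻¹] :=
    { eval₂ (C : K →+* K[T;T⁻¹]) u with
      commutes' := fun r => by
        change eval₂ (C : K →+* K[T;T⁻¹]) u (algebraMap K _ r) = _
        rw [← C_eq_algebraMap, eval₂_C] }
  have hσ : ∀ (c : K) (n : ℤ), σ (C c * T n) = ((q ^ n : Kˣ) : K) • (C c * T n) := by
    intro c n
    change eval₂ (C : K →+* K[T;T⁻¹]) u (C c * T n) = _
    rw [eval₂_C_mul_T, hu, smul_eq_C_mul]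
    ring
  refine weyl_core σ t p q hq1 ?_ ?_ e
  · have := hσ 1 1
    simpa using this
  · intro f hf
    obtain ⟨c, n, rfl⟩ := laurent_unit f hf
    exact ⟨n, hσ c n⟩

/-- for `p, q` non-roots of unity, `A_1^p(K) ≅ A_1^q(K)` implies
`p = q` or `p = q⁻¹`. -/
theorem quantumWeyl_iso_nonroot (K : Type*) [Field K] [CharZero K] (p q : Kˣ)
    (hp : ∀ n : ℕ, 0 < n → p ^ n ≠ 1) (hq : ∀ n : ℕ, 0 < n → q ^ n ≠ 1)
    (h : Nonempty (QuantumWeyl K (p : K) ≃ₐ[K] QuantumWeyl K (q : K))) :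
    p = q ∨ p = q⁻¹ := by
  obtain ⟨e⟩ := h
  have hp1 : (p : K) ≠ 1 := by simpa using hp 1 one_pos
  have hq1 : (q : K) ≠ 1 := by simpa using hq 1 one_pos
  obtain ⟨n, hn⟩ := weyl_pow p q hq1 e
  obtain ⟨m, hm⟩ := weyl_pow q p hp1 e.symm
  have hinj : Function.Injective (fun k : ℤ => q ^ k) := by
    rw [injective_zpow_iff_not_isOfFinOrder, isOfFinOrder_iff_pow_eq_one]
    rintro ⟨k, hk, hk'⟩
    exact hq k hk hk'
  have h1 : n * m = 1 := by
    apply hinj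
    change q ^ (n * m) = q ^ (1 : ℤ)
    rw [zpow_mul, ← hn, ← hm, zpow_one]
  rcases Int.eq_one_or_neg_one_of_mul_eq_one h1 with rfl | rfl
  · left; simpa using hn
  · right; simpa using hn
end

section
/- Let K be a field of characteristic 0 and let p, q ∈ Kˣ be roots of unity with p ≠ 1, p ≠ −1, q ≠ 1, q ≠ −1. If the quantum Weyl algebras A_1^p(K) and A_1^q(K) are isomorphic as K-algebras, then p = q or p = q⁻¹. -/
open LaurentPolynomial in
/-- Units of the Laurent polynomial ring over a field are monomials. -/
lemma qw_laurent_unit {K : Type*} [Field K] (f g : LaurentPolynomial K) (h : f * g = 1) :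
    ∃ (c : K) (k : ℤ), c ≠ 0 ∧ f = C c * T k := by
  obtain ⟨n, f', hf⟩ := LaurentPolynomial.exists_T_pow f
  obtain ⟨m, g', hg⟩ := LaurentPolynomial.exists_T_pow g
  have h1 : f' * g' = Polynomial.X ^ (n + m) := by
    apply Polynomial.toLaurent_injective
    rw [map_mul, hf, hg, Polynomial.toLaurent_X_pow]
    push_cast
    rw [T_add]
    linear_combination (T n * T m) * h
  obtain ⟨i, -, hi⟩ := (dvd_prime_pow Polynomial.prime_X _).1 (Dvd.intro _ h1)
  obtain ⟨u, hu⟩ := hi.symm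
  obtain ⟨c, hc, hcu⟩ := Polynomial.isUnit_iff.1 u.isUnit
  refine ⟨c, i - n, hc.ne_zero, ?_⟩
  have h2 : f * T n = C c * T i := by
    rw [← hf, ← hu, ← hcu, map_mul, Polynomial.toLaurent_X_pow, Polynomial.toLaurent_C, mul_comm]
  have h3 : (T n : LaurentPolynomial K) * T (-n) = 1 := by
    rw [← T_add]; simp
  rw [T_sub]
  linear_combination (T (-n)) * h2 - f * h3

section
variable {K : Type*} [Field K]

lemma qw_rel (q : K) : wgen K q 0 * wgen K q 1 = q • (wgen K q 1 * wgen K q 0) + 1 := by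
  have := RingQuot.mkAlgHom_rel K (WeylRel.rel (K := K) (q := q))
  simpa [wgen] using this

lemma qw_z (p : K) {B : Type*} [Ring B] [Algebra K B] (x y : B) (hrel : x * y = p • (y * x) + 1) :
    x * (x * y - y * x) = p • ((x * y - y * x) * x) := by
  have hz2 : x * y - y * x = (p - 1) • (y * x) + 1 := by
    rw [hrel, sub_smul, one_smul]; abel
  have : x * (y * x) = p • (y * x * x) + x := by
    rw [← mul_assoc, hrel, add_mul, smul_mul_assoc, one_mul]
  rw [hz2, mul_add, mul_smul_comm, this, add_mul, smul_mul_assoc]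
  simp only [one_mul, mul_one]
  module

lemma qw_ind (q : K) {P : QuantumWeyl K q → Prop} (hc : ∀ r, P (algebraMap K _ r))
    (hx : P (wgen K q 0)) (hy : P (wgen K q 1)) (hmul : ∀ a b, P a → P b → P (a * b))
    (hadd : ∀ a b, P a → P b → P (a + b)) (a : QuantumWeyl K q) : P a := by
  obtain ⟨f, rfl⟩ := RingQuot.mkAlgHom_surjective K _ a
  induction f using FreeAlgebra.induction with
  | grade0 r => simpa using hc r
  | grade1 i => fin_cases i
                · exact hx
                · exact hy
  | mul a b ha hb => rw [map_mul]; exact hmul _ _ ha hb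
  | add a b ha hb => rw [map_add]; exact hadd _ _ ha hb

lemma qw_lift (q : K) {B : Type*} [Ring B] [Algebra K B] (x y : B) (h : x * y = q • (y * x) + 1) :
    ∃ f : QuantumWeyl K q →ₐ[K] B, f (wgen K q 0) = x ∧ f (wgen K q 1) = y := by
  refine ⟨RingQuot.liftAlgHom K ⟨FreeAlgebra.lift K ![x, y], ?_⟩, ?_, ?_⟩
  · rintro _ _ ⟨⟩
    simpa using h
  · simp [wgen, RingQuot.liftAlgHom_mkAlgHom_apply]
  · simp [wgen, RingQuot.liftAlgHom_mkAlgHom_apply]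

open LaurentPolynomial

lemma qw_sigma (q : Kˣ) : ∃ s : LaurentPolynomial K →+* LaurentPolynomial K,
    (∀ c, s (C c) = C c) ∧ ∀ n : ℤ, s (T n) = C ((q ^ n : Kˣ) : K) * T n := by
  let t : (LaurentPolynomial K)ˣ := ⟨T 1, T (-1), by rw [← T_add]; simp, by rw [← T_add]; simp⟩
  have ht : ∀ n : ℤ, ((t ^ n : (LaurentPolynomial K)ˣ) : LaurentPolynomial K) = T n := by
    intro n
    cases n with
    | ofNat n => simp [t]
    | negSucc n => simp [t, zpow_negSucc, ← inv_pow, -T_pow]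
                   simp [T_pow, Int.negSucc_eq]
  refine ⟨eval₂ C (Units.map (C : K →+* LaurentPolynomial K).toMonoidHom q * t), by simp, ?_⟩
  intro n
  rw [eval₂_T, mul_zpow, Units.val_mul, ht, ← map_zpow]
  rfl

/-- The triangular representation, with its properties. -/
lemma qw_rep (q : Kˣ) (hq1 : (q : K) ≠ 1) (s : LaurentPolynomial K →+* LaurentPolynomial K)
    (hs : ∀ c, s (C c) = C c) (hT : ∀ n : ℤ, s (T n) = C ((q ^ n : Kˣ) : K) * T n) :
    ∃ (r : QuantumWeyl K (q : K) →ₐ[K] Matrix (Fin 2) (Fin 2) (LaurentPolynomial K))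
      (d : QuantumWeyl K (q : K) →ₐ[K] LaurentPolynomial K),
      (∀ a, r a 1 0 = 0 ∧ r a 1 1 = d a ∧ r a 0 0 = s (d a)) ∧ d (wgen K q 0) = T 1 ∧
      r (wgen K q 0) * r (wgen K q 1) ≠ r (wgen K q 1) * r (wgen K q 0) := by
  have h1 : (1 - (q : K)) ≠ 0 := sub_ne_zero.2 hq1.symm
  have hTT : (T 1 : LaurentPolynomial K) * T (-1) = 1 := by rw [← T_add]; simp
  have hCC : (C (1 - (q : K)) : LaurentPolynomial K) * C (1 - (q : K))⁻¹ = 1 := by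
    rw [← map_mul, mul_inv_cancel₀ h1, map_one]
  have hqq : (C (q : K) : LaurentPolynomial K) * C (q : K)⁻¹ = 1 := by
    rw [← map_mul, mul_inv_cancel₀ q.ne_zero, map_one]
  rw [map_sub, map_one] at hCC
  obtain ⟨d, dx, dy⟩ := qw_lift (q : K) (T 1 : LaurentPolynomial K) (C (1 - (q : K))⁻¹ * T (-1)) (by
    rw [smul_eq_C_mul]
    linear_combination (1 - C (q : K)) * C (1 - (q : K))⁻¹ * hTT + hCC)
  obtain ⟨r, rx, ry⟩ := qw_lift (q : K)
    (!![C (q : K) * T 1, 0; 0, T 1] : Matrix (Fin 2) (Fin 2) (LaurentPolynomial K))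
    (!![C (q : K)⁻¹ * (C (1 - (q : K))⁻¹ * T (-1)), 1; 0, C (1 - (q : K))⁻¹ * T (-1)]) (by
    refine Matrix.ext fun i j => ?_
    fin_cases i <;> fin_cases j <;> simp only [Matrix.mul_apply, Fin.sum_univ_two,
      Matrix.add_apply, Matrix.smul_apply, smul_eq_C_mul, Matrix.of_apply, Matrix.cons_val',
      Matrix.cons_val_zero, Matrix.cons_val_one, Matrix.one_apply, Fin.zero_eta, Fin.mk_one,
      Matrix.cons_val_fin_one, Fin.isValue] <;> norm_num
    · linear_combination (C (q : K) * C (q : K)⁻¹ : LaurentPolynomial K) * ((1 - C (q : K)) * C (1 - (q : K))⁻¹ * hTT + hCC) + hqq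
    · linear_combination hCC)
  refine ⟨r, d, ?_, dx, ?_⟩
  · intro a
    induction a using qw_ind with
    | hc c => simp [Matrix.algebraMap_matrix_apply, LaurentPolynomial.algebraMap_apply, hs]
    | hx => simp [rx, dx, hT]
    | hy => simp [ry, dy, hT, hs]; ring
    | hmul a b ha hb =>
      simp [Matrix.mul_apply, Fin.sum_univ_two, ha, hb]
    | hadd a b ha hb => simp [ha, hb]
  · intro h
    rw [rx, ry] at h
    have := congrFun (congrFun h 0) 1
    simp [Matrix.mul_apply, Fin.sum_univ_two] at this
    have h2 : (C ((q : K) - 1) : LaurentPolynomial K) = C 0 := by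
      rw [map_sub, map_one, map_zero]
      linear_combination T (-1) * this - (C (q : K) - 1) * hTT
    have h3 := congrArg (fun f => f.coeff 0) h2
    simp [sub_eq_zero, hq1] at h3

lemma qw_comm (p : K) {B : Type*} [Ring B] [Algebra K B] (f : QuantumWeyl K p →ₐ[K] B)
    (h : f (wgen K p 0) * f (wgen K p 1) = f (wgen K p 1) * f (wgen K p 0))
    (a b : QuantumWeyl K p) : Commute (f a) (f b) := by
  have key : ∀ c : B, Commute c (f (wgen K p 0)) → Commute c (f (wgen K p 1)) →
      ∀ a, Commute c (f a) := by
    intro c h0 h1 a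
    induction a using qw_ind with
    | hc r => rw [AlgHom.commutes]; exact (Algebra.commutes r c).symm
    | hx => exact h0
    | hy => exact h1
    | hmul a b ha hb => rw [map_mul]; exact ha.mul_right hb
    | hadd a b ha hb => rw [map_add]; exact ha.add_right hb
  exact key _ (key _ (Commute.refl _) h a).symm
    (key _ h.symm (Commute.refl _) a).symm b

lemma qw_exponent (p : K) (e : QuantumWeyl K p →ₐ[K] LaurentPolynomial K) (c : K) (k : ℤ)
    (hp1 : p ≠ 1) (hc : c ≠ 0) (hx : e (wgen K p 0) = C c * T k) (a) (ha : e a = T 1) :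
    k.natAbs = 1 := by
  let g1 := AddMonoidAlgebra.mapDomainAlgHom K K (Int.castAddHom (ZMod k.natAbs))
  let g2 := AddMonoidAlgebra.mapDomainAlgHom K K (0 : ℤ →+ ZMod k.natAbs)
  have gx : g1 (e (wgen K p 0)) = g2 (e (wgen K p 0)) := by
    have hk : ((k : ℤ) : ZMod k.natAbs) = 0 := by
      rw [ZMod.intCast_zmod_eq_zero_iff_dvd]; simp
    rw [hx, ← single_eq_C_mul_T]
    simp [g1, g2, hk, -single_eq_C_mul_T]
  have hrel : (1 - C p) * (e (wgen K p 0) * e (wgen K p 1)) = 1 := by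
    have := congrArg e (qw_rel p)
    rw [map_mul, map_add, map_smul, map_mul, map_one, smul_eq_C_mul] at this
    linear_combination this
  have gy : g1 (e (wgen K p 1)) = g2 (e (wgen K p 1)) := by
    have h1 := congrArg g1 hrel
    have h2 := congrArg g2 hrel
    have hC : g1 (1 - C p) = g2 (1 - C p) := by
      rw [C_eq_algebraMap, map_sub, map_sub, AlgHom.commutes, AlgHom.commutes, map_one, map_one]
    simp only [map_mul, map_one] at h1 h2
    rw [hC, gx] at h1
    generalize g2 (1 - C p) = A at *
    linear_combination g1 (e (wgen K p 1)) * (-h2) + g2 (e (wgen K p 1)) * h1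
  have gall : ∀ b, g1 (e b) = g2 (e b) := by
    intro b
    induction b using qw_ind with
    | hc r => simp only [AlgHom.commutes]
    | hx => exact gx
    | hy => exact gy
    | hmul a b ha hb => simp only [map_mul, ha, hb]
    | hadd a b ha hb => simp only [map_add, ha, hb]
  have := gall a
  rw [ha] at this
  simp only [g1, g2, T, AddMonoidAlgebra.mapDomainAlgHom_apply, AddMonoidAlgebra.mapDomain_single] at this
  have h2 := congrArg (fun f => f.coeff 0) this
  by_contra hne
  have h10 : (1 : ZMod k.natAbs) ≠ 0 := by
    have := (ZMod.intCast_zmod_eq_zero_iff_dvd 1 k.natAbs).not.2 (by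
      intro h
      have h5 := Int.natAbs_dvd_natAbs.2 h
      rw [Int.natAbs_natCast] at h5
      exact hne (Nat.dvd_one.1 h5))
    simpa using this
  simp [h10] at h2

end

open LaurentPolynomial in
/-- for `p, q` roots of unity, not equal to `±1`,
`A_1^p(K) ≅ A_1^q(K)` implies `p = q` or `p = q⁻¹`. -/
theorem quantumWeyl_iso_root (K : Type*) [Field K] [CharZero K] (p q : Kˣ)
    (hp : ∃ n : ℕ, 0 < n ∧ p ^ n = 1) (hq : ∃ n : ℕ, 0 < n ∧ q ^ n = 1)
    (hp1 : (p : K) ≠ 1) (hp2 : (p : K) ≠ -1) (hq1 : (q : K) ≠ 1) (hq2 : (q : K) ≠ -1)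
    (h : Nonempty (QuantumWeyl K (p : K) ≃ₐ[K] QuantumWeyl K (q : K))) :
    p = q ∨ p = q⁻¹ := by

  obtain ⟨φ⟩ := h
  obtain ⟨s, hs, hT⟩ := qw_sigma q
  obtain ⟨r, d, hr, dx, hne⟩ := qw_rep q hq1 s hs hT
  let ψ := r.comp φ.toAlgHom
  let e := d.comp φ.toAlgHom
  have hψ : ∀ a, ψ a 1 0 = 0 ∧ ψ a 1 1 = e a ∧ ψ a 0 0 = s (e a) := fun a => hr (φ a)
  set x := wgen K (p : K) 0 with hx
  set y := wgen K (p : K) 1 with hy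
  have hrel := qw_rel (p : K)
  rw [← hx, ← hy] at hrel
  have hrele : (1 - C (p : K)) * (e x * e y) = 1 := by
    have := congrArg e hrel
    rw [map_mul, map_add, map_smul, map_mul, map_one, smul_eq_C_mul] at this
    linear_combination this
  obtain ⟨c, k, hc, hk⟩ := qw_laurent_unit (e x) ((1 - C (p : K)) * e y)
    (by linear_combination hrele)
  have hk1 : k.natAbs = 1 := by
    refine qw_exponent (p : K) e c k hp1 hc hk (φ.symm (wgen K (q : K) 0)) ?_
    simp [e, dx]
  have hnc : ψ x * ψ y ≠ ψ y * ψ x := by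
    intro h
    apply hne
    have := qw_comm (p : K) ψ h (φ.symm (wgen K (q : K) 0)) (φ.symm (wgen K (q : K) 1))
    simpa [ψ] using this.eq
  set z := x * y - y * x with hz
  have hz01 : ψ z 0 1 ≠ 0 := by
    intro h0
    apply hnc
    rw [← sub_eq_zero, ← map_mul, ← map_mul, ← map_sub, ← hz]
    have hez : e z = 0 := by rw [hz, map_sub, map_mul, map_mul, mul_comm, sub_self]
    refine Matrix.ext fun i j => ?_
    fin_cases i <;> fin_cases j
    · simp [(hψ z).2.2, hez]
    · exact h0
    · simp [(hψ z).1]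
    · simp [(hψ z).2.1, hez]
  have hxz : x * z = (p : K) • (z * x) := qw_z (p : K) x y hrel
  have hm := congrFun (congrFun (congrArg ψ hxz) 0) 1
  have hez : e z = 0 := by rw [hz, map_sub, map_mul, map_mul, mul_comm, sub_self]
  rw [map_mul, map_smul, map_mul] at hm
  simp only [Matrix.mul_apply, Matrix.smul_apply, Fin.sum_univ_two, (hψ _).2.1, (hψ _).2.2, hez,
    smul_eq_C_mul, map_zero, mul_zero, zero_mul, add_zero, zero_add] at hm
  have hm2 : s (e x) = C (p : K) * e x := by
    apply mul_right_cancel₀ hz01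
    linear_combination hm
  have hpq : ((q ^ k : Kˣ) : K) = p := by
    rw [hk, map_mul, hs, hT] at hm2
    have h2 : (C c * C ((q ^ k : Kˣ) : K) : LaurentPolynomial K) * T k = C (p : K) * C c * T k := by
      linear_combination hm2
    have h3 := congrArg (fun f => f.coeff k) h2
    rw [← map_mul, ← map_mul] at h3
    simp only [← single_eq_C_mul_T, AddMonoidAlgebra.coeff_single, Finsupp.single_eq_same] at h3
    apply mul_left_cancel₀ hc
    rw [h3, mul_comm]
  have hpq' : q ^ k = p := Units.ext hpq
  rcases Int.natAbs_eq k with h | h <;> rw [hk1] at h <;> subst h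
  · left; simpa using hpq'.symm
  · right; simpa using hpq'.symm
end

section
/- Let K be a field, let R and S be affine connected ℕ-graded K-algebras generated in degree 1, and let Φ : R → S be a K-algebra isomorphism (not assumed to respect the gradings). Suppose x, y ∈ R₁ are nonzero elements satisfying x·y = p·y·x for some p ∈ Kˣ with p ≠ 1. Then the degree-0 homogeneous components of Φ(x) and of Φ(y) are both zero. -/
/-- If `u * v = p • (v * u)` with `p ≠ 1` and `v ≠ 0`, then `u` has no constant term. -/
lemma constant_term_eq_zero_of_qcomm (K : Type*) [Field K] (S : Type*) [Ring S] [Algebra K S]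
    (ℬ : ℕ → Submodule K S) [GradedAlgebra ℬ] (hS0 : ℬ 0 = 1)
    (u v : S) (hv : v ≠ 0) (p : K) (hp : p ≠ 1) (huv : u * v = p • (v * u)) :
    (DirectSum.decompose ℬ u 0 : ℬ 0) = 0 := by
  classical
  by_contra h0
  obtain ⟨a, ha⟩ : ∃ a : K, algebraMap K S a = (DirectSum.decompose ℬ u 0 : S) := by
    have hm : (DirectSum.decompose ℬ u 0 : S) ∈ (1 : Submodule K S) :=
      hS0 ▸ (DirectSum.decompose ℬ u 0).2
    exact Submodule.mem_one.1 hm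
  have ha0 : a ≠ 0 := by
    rintro rfl
    apply h0
    apply Subtype.ext
    rw [← ha]
    simp
  have key : ∀ n, (DirectSum.decompose ℬ v n : S) = 0 := by
    intro n
    induction n using Nat.strong_induction_on with
    | _ n ih =>
      have h1 : (DirectSum.decompose ℬ (u * v) n : S) =
          algebraMap K S a * (DirectSum.decompose ℬ v n : S) := by
        rw [DirectSum.decompose_mul, DirectSum.coe_mul_apply_eq_sum_antidiagonal,
          Finset.sum_eq_single (0, n), ha]
        · rintro ⟨i, j⟩ hij hne
          rw [Finset.HasAntidiagonal.mem_antidiagonal] at hij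
          have hj : j < n := by
            have : i ≠ 0 := by
              rintro rfl
              apply hne
              simpa using hij
            simp only at hij
            omega
          simp [ih j hj]
        · intro h
          simp at h
      have h2 : (DirectSum.decompose ℬ (v * u) n : S) =
          (DirectSum.decompose ℬ v n : S) * algebraMap K S a := by
        rw [DirectSum.decompose_mul, DirectSum.coe_mul_apply_eq_sum_antidiagonal,
          Finset.sum_eq_single (n, 0), ha]
        · rintro ⟨j, i⟩ hij hne
          rw [Finset.HasAntidiagonal.mem_antidiagonal] at hij
          have hj : j < n := by
            have : i ≠ 0 := by
              rintro rfl
              apply hne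
              simpa using hij
            simp only at hij
            omega
          simp [ih j hj]
        · intro h
          simp at h
      have h3 : (DirectSum.decompose ℬ (u * v) n : S) =
          p • (DirectSum.decompose ℬ (v * u) n : S) := by
        rw [huv, DirectSum.decompose_smul]
        rfl
      rw [h1, h2, ← Algebra.commutes, ← Algebra.smul_def, smul_smul, ← sub_eq_zero,
        ← sub_smul] at h3
      rcases smul_eq_zero.1 h3 with h | h
      · exfalso
        have h4 : (1 - p) * a = 0 := by rw [← h]; ring
        rcases mul_eq_zero.1 h4 with h | h
        · exact hp (sub_eq_zero.1 h).symm
        · exact ha0 h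
      · exact h
  apply hv
  have : DirectSum.decompose ℬ v = 0 := by
    ext n
    simpa using key n
  exact (DirectSum.decompose ℬ).injective (this.trans (DirectSum.decompose_zero ℬ).symm)


/-- let `R, S` be affine connected ℕ-graded `K`-algebras
generated in degree 1, and let `Φ : R → S` be a `K`-algebra isomorphism (not
necessarily graded).  If `x, y ∈ R₁` are nonzero with `x·y = p·(y·x)` for some
unit `p ≠ 1` of `K`, then the degree-0 homogeneous components of `Φ(x)` and
`Φ(y)` are both zero. -/
theorem degree_zero_component_eq_zero (K : Type*) [Field K]
    (R S : Type*) [Ring R] [Ring S] [Algebra K R] [Algebra K S]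
    (𝒜 : ℕ → Submodule K R) (ℬ : ℕ → Submodule K S)
    [GradedAlgebra 𝒜] [GradedAlgebra ℬ]
    (hR0 : 𝒜 0 = 1) (hS0 : ℬ 0 = 1)
    (hRaff : FiniteDimensional K (𝒜 1)) (hSaff : FiniteDimensional K (ℬ 1))
    (hRgen : Algebra.adjoin K (𝒜 1 : Set R) = ⊤)
    (hSgen : Algebra.adjoin K (ℬ 1 : Set S) = ⊤)
    (Φ : R ≃ₐ[K] S)
    (x y : R) (hx : x ∈ 𝒜 1) (hy : y ∈ 𝒜 1) (hx0 : x ≠ 0) (hy0 : y ≠ 0)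
    (p : Kˣ) (hp : (p : K) ≠ 1) (hxy : x * y = (p : K) • (y * x)) :
    (DirectSum.decompose ℬ (Φ x) 0 : ℬ 0) = 0 ∧
    (DirectSum.decompose ℬ (Φ y) 0 : ℬ 0) = 0 := by
  have h1 : Φ x * Φ y = (p : K) • (Φ y * Φ x) := by
    rw [← map_mul, hxy, map_smul, map_mul]
  have h2 : Φ y * Φ x = ((p⁻¹ : Kˣ) : K) • (Φ x * Φ y) := by
    rw [h1, smul_smul]
    simp
  refine ⟨constant_term_eq_zero_of_qcomm K S ℬ hS0 _ _ (by simpa using hy0) _ hp h1,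
    constant_term_eq_zero_of_qcomm K S ℬ hS0 _ _ (by simpa using hx0) _ ?_ h2⟩
  intro h
  apply hp
  have h5 : p⁻¹ = 1 := Units.ext h
  rw [inv_eq_one.1 h5]
  simp
end

section
/- Let K be a field of characteristic 0 and let p, q ∈ Kˣ, neither of which is a root of unity. Let θ : A_1^p(K) → A_1^q(K) be a K-algebra isomorphism, let X, Y denote the images in A_1^p(K) of the two free generators, and let x, y denote those in A_1^q(K). Then there exists λ ∈ Kˣ such that θ(XY − YX) = λ·(xy − yx). -/
namespace QW

open Polynomial

variable {K : Type*} [Field K]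

theorem rel (q : K) : wgen K q 0 * wgen K q 1 = q • (wgen K q 1 * wgen K q 0) + 1 := by
  have h := RingQuot.mkAlgHom_rel K (WeylRel.rel (K := K) (q := q))
  simpa [wgen] using h

theorem ind (q : K) (P : QuantumWeyl K q → Prop) (h0 : P (wgen K q 0)) (h1 : P (wgen K q 1))
    (hc : ∀ c, P (algebraMap K _ c)) (hm : ∀ a b, P a → P b → P (a * b))
    (ha : ∀ a b, P a → P b → P (a + b)) (a : QuantumWeyl K q) : P a := by
  obtain ⟨b, rfl⟩ := RingQuot.mkAlgHom_surjective K (WeylRel K q) a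
  induction b using FreeAlgebra.induction with
  | grade0 r => simpa using hc r
  | grade1 i =>
    fin_cases i
    · exact h0
    · exact h1
  | mul a b h h' => rw [map_mul]; exact hm _ _ h h'
  | add a b h h' => rw [map_add]; exact ha _ _ h h'

/-- scaling automorphism -/
noncomputable def sg (q : K) : K[X] →ₐ[K] K[X] := aeval (C q * X)

theorem sg_inj (q : K) (hq : q ≠ 0) (f : K[X]) (h : sg q f = 0) : f = 0 := by
  have : (sg q⁻¹) (sg q f) = f := by
    have h2 : (sg q⁻¹).comp (sg q) = AlgHom.id K _ := by
      apply Polynomial.algHom_ext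
      simp only [sg, AlgHom.comp_apply, aeval_X, map_mul, AlgHom.id_apply]
      rw [← algebraMap_eq, AlgHom.commutes, algebraMap_eq, ← mul_assoc, ← C_mul, mul_inv_cancel₀ hq]
      simp
    exact congrArg (fun g => g f) h2
  rw [← this, h, map_zero]

theorem sg_coeff0 (q : K) (f : K[X]) : (sg q f).coeff 0 = f.coeff 0 := by
  simp only [sg, coeff_zero_eq_eval_zero]
  rw [aeval_def, algebraMap_eq]
  change (f.comp (C q * X)).eval 0 = _
  simp [eval_comp]

/-- the q-derivative -/
noncomputable def dl (q : K) : K[X] →ₗ[K] K[X] where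
  toFun f := C (q - 1)⁻¹ * divX (sg q f - f)
  map_add' f g := by
    rw [← mul_add, ← divX_add, map_add]; congr 2; ring
  map_smul' c f := by
    rw [map_smul, ← smul_sub, RingHom.id_apply, smul_eq_C_mul, divX_C_mul, smul_eq_C_mul]; ring

theorem dl_X (q : K) (hq : q ≠ 1) (f : K[X]) : dl q (X * f) = C q * X * dl q f + f := by
  have hq' : q - 1 ≠ 0 := sub_ne_zero.2 hq
  have e1 : divX (sg q f - f) * X = sg q f - f := by
    have := divX_mul_X_add (sg q f - f)
    rw [coeff_sub, sg_coeff0] at this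
    simpa using this
  have e2 : sg q (X * f) - X * f = X * (C q * sg q f - f) := by
    simp [sg]; ring
  have e3 : C (q - 1)⁻¹ * (C q - 1) = (1 : K[X]) := by
    rw [← C_1, ← C_sub, ← C_mul, inv_mul_cancel₀ hq']
  simp only [dl, LinearMap.coe_mk, AddHom.coe_mk]
  have e4 : divX (X * (C q * sg q f - f)) = C q * sg q f - f := by
    ext n; rw [coeff_divX, add_comm, add_comm 1, coeff_X_mul]
  rw [e2, e4]
  linear_combination (-C q * C (q-1)⁻¹) * e1 + f * e3

/-- action of x -/
noncomputable def xop (q : K) : Module.End K (ℕ → K[X]) where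
  toFun v n := (match n with | 0 => 0 | k+1 => sg q (v k)) + dl q (v n)
  map_add' u v := by
    funext n; cases n <;> simp <;> ring
  map_smul' c v := by
    funext n; cases n <;> simp

theorem xop_zero (q : K) (v : ℕ → K[X]) : xop q v 0 = dl q (v 0) := by simp [xop]
theorem xop_succ (q : K) (v : ℕ → K[X]) (k : ℕ) :
    xop q v (k+1) = sg q (v k) + dl q (v (k+1)) := by simp [xop]

/-- action of y -/
noncomputable def yop (K : Type*) [Field K] : Module.End K (ℕ → K[X]) where
  toFun v n := X * v n
  map_add' u v := by funext n; simp [mul_add]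
  map_smul' c v := by funext n; simp

theorem yop_apply (v : ℕ → K[X]) (k : ℕ) : yop K v k = X * v k := rfl

theorem xy_op (q : K) (hq : q ≠ 1) : xop q * yop K = q • (yop K * xop q) + 1 := by
  ext1 v
  funext n
  cases n with
  | zero =>
    simp [xop_zero, yop_apply, dl_X q hq, smul_eq_C_mul]
    ring
  | succ k =>
    simp [xop_succ, yop_apply, dl_X q hq, smul_eq_C_mul]
    simp [sg]
    ring

/-- the representation -/
noncomputable def act (q : K) (hq : q ≠ 1) : QuantumWeyl K q →ₐ[K] Module.End K (ℕ → K[X]) :=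
  RingQuot.liftAlgHom K ⟨FreeAlgebra.lift K ![xop q, yop K], by
    intro a b h
    cases h
    simpa using xy_op q hq⟩

theorem act_x (q : K) (hq : q ≠ 1) : act q hq (wgen K q 0) = xop q := by
  simp [act, wgen]
theorem act_y (q : K) (hq : q ≠ 1) : act q hq (wgen K q 1) = yop K := by
  simp [act, wgen]

/-- normal form evaluation -/
noncomputable def ev (q : K) (v : K[X][X]) : QuantumWeyl K q :=
  eval₂ (aeval (wgen K q 1) : K[X] →ₐ[K] QuantumWeyl K q).toRingHom (wgen K q 0) v

theorem ev_add (q : K) (v w : K[X][X]) : ev q (v + w) = ev q v + ev q w := eval₂_add _ _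

theorem ev_monomial (q : K) (n : ℕ) (f : K[X]) :
    ev q (monomial n f) = aeval (wgen K q 1) f * wgen K q 0 ^ n := eval₂_monomial _ _

theorem x_aeval (q : K) (f : K[X]) : ∃ g h : K[X], wgen K q 0 * aeval (wgen K q 1) f =
    aeval (wgen K q 1) g * wgen K q 0 + aeval (wgen K q 1) h := by
  induction f using Polynomial.induction_on with
  | C a =>
    refine ⟨C a, 0, ?_⟩
    simp [Algebra.commutes]
  | add f f' hf hf' =>
    obtain ⟨g, h, e⟩ := hf
    obtain ⟨g', h', e'⟩ := hf'
    refine ⟨g + g', h + h', ?_⟩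
    rw [map_add, mul_add, e, e', map_add, map_add]; noncomm_ring
  | monomial n a hf =>
    obtain ⟨g, h, e⟩ := hf
    refine ⟨C q * X * g, C q * X * h + C a * X ^ n, ?_⟩
    have : C a * X ^ (n+1) = X * (C a * X ^ n) := by ring
    rw [this, map_mul, aeval_X, ← mul_assoc, rel, add_mul, smul_mul_assoc, mul_assoc, e]
    simp only [map_add, map_mul, aeval_C, aeval_X, Algebra.algebraMap_eq_smul_one]
    simp only [mul_add, smul_add, smul_mul_assoc, one_mul, mul_assoc, add_assoc]

theorem ev_surj (q : K) (a : QuantumWeyl K q) : ∃ v, a = ev q v := by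
  have key : ∀ a : QuantumWeyl K q, ∀ v, ∃ w, a * ev q v = ev q w := by
    intro a
    induction a using ind q with
    | h0 =>
      intro v
      induction v using Polynomial.induction_on' with
      | add v v' h h' =>
        obtain ⟨w, e⟩ := h
        obtain ⟨w', e'⟩ := h'
        exact ⟨w + w', by rw [ev_add, mul_add, e, e', ev_add]⟩
      | monomial n f =>
        obtain ⟨g, h, e⟩ := x_aeval q f
        refine ⟨monomial (n+1) g + monomial n h, ?_⟩
        rw [ev_add, ev_monomial, ev_monomial, ev_monomial, ← mul_assoc, e, add_mul, pow_succ',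
          mul_assoc]
    | h1 =>
      intro v
      induction v using Polynomial.induction_on' with
      | add v v' h h' =>
        obtain ⟨w, e⟩ := h
        obtain ⟨w', e'⟩ := h'
        exact ⟨w + w', by rw [ev_add, mul_add, e, e', ev_add]⟩
      | monomial n f =>
        refine ⟨monomial n (X * f), ?_⟩
        rw [ev_monomial, ev_monomial, map_mul, aeval_X, mul_assoc]
    | hc c =>
      intro v
      induction v using Polynomial.induction_on' with
      | add v v' h h' =>
        obtain ⟨w, e⟩ := h
        obtain ⟨w', e'⟩ := h'
        exact ⟨w + w', by rw [ev_add, mul_add, e, e', ev_add]⟩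
      | monomial n f =>
        refine ⟨monomial n (C c * f), ?_⟩
        rw [ev_monomial, ev_monomial, map_mul, aeval_C, mul_assoc]
    | hm a b h h' =>
      intro v
      obtain ⟨w, e⟩ := h' v
      obtain ⟨w', e'⟩ := h w
      exact ⟨w', by rw [mul_assoc, e, e']⟩
    | ha a b h h' =>
      intro v
      obtain ⟨w, e⟩ := h v
      obtain ⟨w', e'⟩ := h' v
      exact ⟨w + w', by rw [add_mul, e, e', ev_add]⟩
  obtain ⟨w, e⟩ := key a (monomial 0 1)
  refine ⟨w, ?_⟩
  rw [← e, ev_monomial]; simp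

theorem act_aeval (q : K) (hq : q ≠ 1) (f : K[X]) (u : ℕ → K[X]) (k : ℕ) :
    act q hq (aeval (wgen K q 1) f) u k = f * u k := by
  rw [← Polynomial.aeval_algHom_apply, act_y]
  induction f using Polynomial.induction_on generalizing u with
  | C a => simp [smul_eq_C_mul]
  | add f g hf hg => simp [hf, hg, add_mul]
  | monomial n a hf =>
    have : C a * X ^ (n+1) = (C a * X ^ n) * X := by ring
    rw [this, map_mul, Module.End.mul_apply, hf, aeval_X, yop_apply]; ring

theorem act_xpow (q : K) (hq : q ≠ 1) (j m : ℕ) (u : ℕ → K[X]) (hu : ∀ k, m < k → u k = 0) :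
    act q hq (wgen K q 0 ^ j) u (j + m) = (sg q)^[j] (u m) ∧
    ∀ k, j + m < k → act q hq (wgen K q 0 ^ j) u k = 0 := by
  induction j with
  | zero => simpa using hu
  | succ j ih =>
    obtain ⟨h1, h2⟩ := ih
    rw [pow_succ', map_mul, act_x]
    constructor
    · rw [Module.End.mul_apply, show j + 1 + m = (j + m) + 1 by ring, xop_succ, h1,
        h2 _ (by omega), Function.iterate_succ_apply', map_zero, add_zero]
    · intro k hk
      obtain ⟨k, rfl⟩ : ∃ k', k = k' + 1 := ⟨k - 1, by omega⟩
      rw [Module.End.mul_apply, xop_succ, h2 _ (by omega), h2 _ (by omega)]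
      simp

theorem act_ev (q : K) (hq : q ≠ 1) (v : K[X][X]) (m : ℕ) (u : ℕ → K[X])
    (hu : ∀ k, m < k → u k = 0) :
    act q hq (ev q v) u (v.natDegree + m) = v.leadingCoeff * (sg q)^[v.natDegree] (u m) ∧
    ∀ k, v.natDegree + m < k → act q hq (ev q v) u k = 0 := by
  have e : ∀ k, act q hq (ev q v) u k =
      ∑ i ∈ Finset.range (v.natDegree + 1), v.coeff i * act q hq (wgen K q 0 ^ i) u k := by
    intro k
    rw [ev, eval₂_eq_sum_range, map_sum, LinearMap.sum_apply, Finset.sum_apply]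
    refine Finset.sum_congr rfl fun i _ => ?_
    rw [map_mul, Module.End.mul_apply]
    exact act_aeval q hq _ _ _
  constructor
  · rw [e, Finset.sum_range_succ, (act_xpow q hq _ m u hu).1, Finset.sum_eq_zero, zero_add]
    · rfl
    intro i hi
    rw [(act_xpow q hq i m u hu).2, mul_zero]
    have := Finset.mem_range.1 hi
    omega
  · intro k hk
    rw [e]
    refine Finset.sum_eq_zero fun i hi => ?_
    rw [(act_xpow q hq i m u hu).2, mul_zero]
    have := Finset.mem_range.1 hi
    omega

theorem sg_iter (q : K) (hq : q ≠ 0) (n : ℕ) (f : K[X]) (hf : f ≠ 0) : (sg q)^[n] f ≠ 0 := by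
  induction n with
  | zero => simpa
  | succ n ih =>
    rw [Function.iterate_succ_apply']
    exact fun h => ih (sg_inj q hq _ h)

theorem act_mul_ne (q : K) (hq : q ≠ 1) (hq0 : q ≠ 0) (v w : K[X][X]) (hv : v ≠ 0) (hw : w ≠ 0) :
    act q hq (ev q v * ev q w) (Pi.single 0 1) (v.natDegree + w.natDegree) ≠ 0 := by
  obtain ⟨h1, h2⟩ := act_ev q hq w 0 (Pi.single 0 1) (by
    intro k hk; rw [Pi.single_eq_of_ne (by omega)])
  rw [add_zero] at h1 h2
  obtain ⟨h3, -⟩ := act_ev q hq v _ _ h2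
  rw [map_mul, Module.End.mul_apply, h3, h1]
  refine mul_ne_zero (leadingCoeff_ne_zero.2 hv) (sg_iter q hq0 _ _ ?_)
  exact mul_ne_zero (leadingCoeff_ne_zero.2 hw) (sg_iter q hq0 _ _ (by simp))

theorem ev_zero (q : K) : ev q 0 = 0 := eval₂_zero _ _

theorem mul_ne (q : K) (hq : q ≠ 1) (hq0 : q ≠ 0) (a b : QuantumWeyl K q) (ha : a ≠ 0)
    (hb : b ≠ 0) : a * b ≠ 0 := by
  obtain ⟨v, rfl⟩ := ev_surj q a
  obtain ⟨w, rfl⟩ := ev_surj q b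
  intro h
  refine act_mul_ne q hq hq0 v w ?_ ?_ (by rw [h]; simp)
  · rintro rfl; exact ha (ev_zero q)
  · rintro rfl; exact hb (ev_zero q)

theorem one_ne (q : K) (hq : q ≠ 1) : (1 : QuantumWeyl K q) ≠ 0 := by
  intro h
  have h2 := congrArg (fun a => act q hq a (Pi.single 0 1) 0) h
  simp at h2

theorem unit_scalar (q : K) (hq : q ≠ 1) (hq0 : q ≠ 0) (a b : QuantumWeyl K q) (h : a * b = 1) :
    ∃ c : K, c ≠ 0 ∧ a = algebraMap K _ c := by
  have ha : a ≠ 0 := by rintro rfl; rw [zero_mul] at h; exact one_ne q hq h.symm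
  have hb : b ≠ 0 := by rintro rfl; rw [mul_zero] at h; exact one_ne q hq h.symm
  obtain ⟨v, rfl⟩ := ev_surj q a
  obtain ⟨w, rfl⟩ := ev_surj q b
  have h2 := act_mul_ne q hq hq0 v w (by rintro rfl; exact ha (ev_zero q))
    (by rintro rfl; exact hb (ev_zero q))
  rw [h, map_one, Module.End.one_apply] at h2
  have h3 : v.natDegree + w.natDegree = 0 := by
    by_contra hne
    exact h2 (by rw [Pi.single_eq_of_ne hne])
  obtain ⟨f, rfl⟩ := natDegree_eq_zero.1 (show v.natDegree = 0 by omega)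
  obtain ⟨g, rfl⟩ := natDegree_eq_zero.1 (show w.natDegree = 0 by omega)
  have evC : ∀ f : K[X], ev q (C f) = aeval (wgen K q 1) f := fun f => eval₂_C _ _
  rw [evC, evC, ← map_mul] at h
  have h4 := congrArg (fun a => act q hq a (Pi.single 0 1) 0) h
  simp only [act_aeval] at h4
  simp at h4
  have hu : IsUnit f := IsUnit.of_mul_eq_one _ h4
  obtain ⟨c, hc, rfl⟩ := Polynomial.isUnit_iff.1 hu
  exact ⟨c, hc.ne_zero, by rw [evC, aeval_C]⟩

/-- the commutator element -/
noncomputable def z (q : K) : QuantumWeyl K q :=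
  wgen K q 0 * wgen K q 1 - wgen K q 1 * wgen K q 0

theorem aux1 {R : Type*} [Ring R] [Algebra K R] (q : K) (a : R) :
    q • a + 1 - a = (q - 1) • a + 1 := by
  rw [sub_smul, one_smul]; abel

theorem aux2 {R : Type*} [Ring R] (a b c : R) :
    a * b * c - c * (a * b) = a * (b * c - c * b) + (a * c - c * a) * b := by noncomm_ring

theorem aux3 {R : Type*} [Ring R] (a b c z w w' : R) (e : a * c - c * a = z * w)
    (e' : b * c - c * b = z * w') : (a + b) * c - c * (a + b) = z * (w + w') := by
  rw [mul_add z, ← e, ← e']; noncomm_ring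

theorem aux4 {R : Type*} [Ring R] (a c z w : R) (e : a * c - c * a = z * w) :
    c * a - a * c = z * (-w) := by
  rw [mul_neg, ← e, neg_sub]

theorem z_eq (q : K) : z q = (q - 1) • (wgen K q 1 * wgen K q 0) + 1 := by
  rw [z, rel]; exact aux1 q (wgen K q 1 * wgen K q 0)

theorem xz (q : K) : wgen K q 0 * z q = z q * (q • wgen K q 0) := by
  rw [z_eq, mul_add, mul_smul_comm, ← mul_assoc, rel]
  simp only [add_mul, smul_mul_assoc, mul_smul_comm, one_mul, mul_one, mul_assoc]
  module

theorem zy (q : K) : z q * wgen K q 1 = q • (wgen K q 1 * z q) := by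
  rw [z_eq, add_mul, smul_mul_assoc, mul_assoc, rel]
  simp only [mul_add, smul_mul_assoc, mul_smul_comm, one_mul, mul_one, mul_assoc]
  module

theorem normal (q : K) (hq0 : q ≠ 0) (a : QuantumWeyl K q) : ∃ b, a * z q = z q * b := by
  induction a using ind q with
  | h0 => exact ⟨_, xz q⟩
  | h1 =>
    refine ⟨q⁻¹ • wgen K q 1, ?_⟩
    rw [mul_smul_comm, zy, smul_smul, inv_mul_cancel₀ hq0, one_smul]
  | hc c => exact ⟨_, Algebra.commutes _ _⟩
  | hm a b h h' =>
    obtain ⟨c, e⟩ := h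
    obtain ⟨c', e'⟩ := h'
    exact ⟨c * c', by rw [mul_assoc, e', ← mul_assoc, e, mul_assoc]⟩
  | ha a b h h' =>
    obtain ⟨c, e⟩ := h
    obtain ⟨c', e'⟩ := h'
    exact ⟨c + c', by rw [add_mul, e, e', mul_add]⟩

theorem comm_of (q : K) (hq0 : q ≠ 0) (c : QuantumWeyl K q)
    (h0 : ∃ w, wgen K q 0 * c - c * wgen K q 0 = z q * w)
    (h1 : ∃ w, wgen K q 1 * c - c * wgen K q 1 = z q * w) (a : QuantumWeyl K q) :
    ∃ w, a * c - c * a = z q * w := by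
  induction a using ind q with
  | h0 => exact h0
  | h1 => exact h1
  | hc r => exact ⟨0, by rw [Algebra.commutes, sub_self, mul_zero]⟩
  | hm a b h h' =>
    obtain ⟨w, e⟩ := h
    obtain ⟨w', e'⟩ := h'
    obtain ⟨a', ea⟩ := normal q hq0 a
    refine ⟨a' * w' + w * b, ?_⟩
    have : a * b * c - c * (a * b) = a * (b * c - c * b) + (a * c - c * a) * b := aux2 a b c
    rw [this, e, e', ← mul_assoc, ea, mul_add, mul_assoc, mul_assoc]
  | ha a b h h' =>
    obtain ⟨w, e⟩ := h
    obtain ⟨w', e'⟩ := h'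
    exact ⟨w + w', aux3 _ _ _ _ _ _ e e'⟩

theorem comm_mem (q : K) (hq0 : q ≠ 0) (a c : QuantumWeyl K q) :
    ∃ w, a * c - c * a = z q * w := by
  have symm' : ∀ a c : QuantumWeyl K q, (∃ w, a * c - c * a = z q * w) →
      ∃ w, c * a - a * c = z q * w := by
    rintro a c ⟨w, e⟩
    exact ⟨-w, aux4 _ _ _ _ e⟩
  have hxy : ∃ w, wgen K q 0 * wgen K q 1 - wgen K q 1 * wgen K q 0 = z q * w :=
    ⟨1, (mul_one _).symm⟩
  refine comm_of q hq0 c (symm' _ _ ?_) (symm' _ _ ?_) a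
  · exact comm_of q hq0 _ ⟨0, by simp⟩ (symm' _ _ hxy) c
  · exact comm_of q hq0 _ hxy ⟨0, by simp⟩ c

theorem z_ne (q : K) (hq : q ≠ 1) : z q ≠ 0 := by
  intro h
  have h2 := congrArg (fun a => act q hq a (Pi.single 0 1) 0) h
  rw [z_eq] at h2
  simp [act_x, act_y, yop_apply, xop_zero, dl] at h2

end QW

/-- for `p, q` non-roots of unity and `θ : A_1^p(K) → A_1^q(K)`
an isomorphism, there is `λ ∈ Kˣ` with `θ(XY - YX) = λ·(xy - yx)`. -/
theorem quantumWeyl_image_of_z (K : Type*) [Field K] [CharZero K] (p q : Kˣ)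
    (hp : ∀ n : ℕ, 0 < n → p ^ n ≠ 1) (hq : ∀ n : ℕ, 0 < n → q ^ n ≠ 1)
    (θ : QuantumWeyl K (p : K) ≃ₐ[K] QuantumWeyl K (q : K)) :
    ∃ l : Kˣ,
      θ (wgen K (p : K) 0 * wgen K (p : K) 1 - wgen K (p : K) 1 * wgen K (p : K) 0) =
        (l : K) • (wgen K (q : K) 0 * wgen K (q : K) 1 - wgen K (q : K) 1 * wgen K (q : K) 0) := by
  have hp1 : (p : K) ≠ 1 := fun h => hp 1 one_pos (by rw [pow_one]; exact Units.ext h)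
  have hq1 : (q : K) ≠ 1 := fun h => hq 1 one_pos (by rw [pow_one]; exact Units.ext h)
  change ∃ l : Kˣ, θ (QW.z (p : K)) = (l : K) • QW.z (q : K)
  obtain ⟨w, hw⟩ := QW.comm_mem (q : K) q.ne_zero (θ (wgen K (p : K) 0)) (θ (wgen K (p : K) 1))
  obtain ⟨w', hw'⟩ := QW.comm_mem (p : K) p.ne_zero (θ.symm (wgen K (q : K) 0))
    (θ.symm (wgen K (q : K) 1))
  rw [← map_mul, ← map_mul, ← map_sub] at hw hw'
  change θ (QW.z (p : K)) = _ at hw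
  change θ.symm (QW.z (q : K)) = _ at hw'
  have h1 : QW.z (q : K) = QW.z (q : K) * (w * θ w') := by
    rw [← mul_assoc, ← hw, ← map_mul, ← hw', AlgEquiv.apply_symm_apply]
  have h2 : w * θ w' = 1 := by
    by_contra hne
    refine QW.mul_ne (q : K) hq1 q.ne_zero _ _ (QW.z_ne _ hq1) (sub_ne_zero.2 hne) ?_
    rw [mul_sub, ← h1, mul_one, sub_self]
  obtain ⟨c, hc, rfl⟩ := QW.unit_scalar (q : K) hq1 q.ne_zero _ _ h2
  refine ⟨Units.mk0 c hc, ?_⟩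
  rw [hw, ← Algebra.commutes, Units.val_mk0, Algebra.smul_def]
end
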